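/- (Complete flag case.) Suppose that for each i = 1,…,N−1 the tuple (σ^(i)_1,…,σ^(i)_{N−i}) is a permutation of (x_1,…,x_{N−i}) — equivalently e_l(σ^(i)_1,…,σ^(i)_{N−i}) = e_l(x_1,…,x_{N−i}) for all l = 1,…,N−i. Then the nested Bethe ansatz state satisfies |ψ^(0)⟩ = ∑_{w ∈ S_N} G^β_w(x_1,…,x_{N−1}; ⊖t_1,…,⊖t_{N−1}) |ω_N w^{−1}⟩, where ω_N ∈ S_N is the longest permutation. -/

import Mathlib

noncomputable section
open scoped BigOperators

variable {F : Type*}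

/-- `x ⊖ y := (x - y)/(1 + β·y)`. -/
def om [Field F] (β x y : F) : F := (x - y) / (1 + β * y)

/-- `⊖ t := -t/(1 + β·t)`. -/
def negOm [Field F] (β t : F) : F := (-t) / (1 + β * t)

/-- The R-matrix `R^{(n)}(x,y)` on `V ⊗ V`, `V = F^n`, with entries
`R_{ij,kl} = (1 + [k<l]·β(x⊖y)) δ_{il} δ_{jk} + [k>l]·(x⊖y) δ_{ik} δ_{jl}`;
the row index is the pair `(i,j)`, the column index is the pair `(k,l)`. -/
def Rmat [Field F] (n : ℕ) (β x y : F) :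
    Matrix (Fin n × Fin n) (Fin n × Fin n) F := Matrix.of fun p q =>
  (if p.1 = q.2 ∧ p.2 = q.1 then (if q.1 < q.2 then 1 + β * om β x y else 1) else 0) +
  (if p.1 = q.1 ∧ p.2 = q.2 ∧ q.2 < q.1 then om β x y else 0)

/-- `R_{a i}(u, τ)` : the R-matrix acting on the auxiliary space (first factor)
and the `i`-th site of `H = (F^n)^{⊗N}`, identity elsewhere. -/
def Rsite [Field F] (n N : ℕ) (β u τ : F) (i : Fin N) :
    Matrix (Fin n × (Fin N → Fin n)) (Fin n × (Fin N → Fin n)) F := Matrix.of fun p q =>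
  Rmat n β u τ (p.1, p.2 i) (q.1, q.2 i) *
    (if ∀ j, j ≠ i → p.2 j = q.2 j then 1 else 0)

/-- The monodromy matrix `T_a(u) = R_{aN}(u,t_N) ⋯ R_{a1}(u,t_1)` on `V_a ⊗ H`. -/
def Tmono [Field F] (n N : ℕ) (β u : F) (t : Fin N → F) :
    Matrix (Fin n × (Fin N → Fin n)) (Fin n × (Fin N → Fin n)) F :=
  ((List.ofFn fun i : Fin N => Rsite n N β u (t i) i).reverse).prod

/-- The block `T_a(u)_{r c}` (with respect to the auxiliary space) as an operator on `H`. -/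
def blockOp [Field F] (n N : ℕ) (β u : F) (t : Fin N → F) (r c : Fin n) :
    Matrix (Fin N → Fin n) (Fin N → Fin n) F :=
  Matrix.of fun s s' => Tmono n N β u t (r, s) (c, s')

/-- The natural basis vector `|n_1,…,n_N⟩` of `H` (also used as a dual basis covector). -/
def ket [Field F] (n N : ℕ) (g : Fin N → Fin n) : (Fin N → Fin n) → F :=
  fun s => if s = g then 1 else 0

/-- The Coxeter length of a permutation: its number of inversions. -/
def permLength {N : ℕ} (w : Equiv.Perm (Fin N)) : ℕ :=
  (Finset.univ.filter fun p : Fin N × Fin N => p.1 < p.2 ∧ w p.2 < w p.1).card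

/-- The longest permutation `ω_N : i ↦ N - 1 - i`. -/
def omegaPerm (N : ℕ) : Equiv.Perm (Fin N) :=
  ⟨Fin.rev, Fin.rev, fun i => Fin.rev_rev i, fun i => Fin.rev_rev i⟩

/-- `IsGroth M β G` says that the family `G`, indexed by `S_{M+1}`, satisfies the
defining recursion of the double β-Grothendieck polynomials:
`G_{ω}(x;y) = ∏_{i+j ≤ M+1} (x_i + y_j + β x_i y_j)` (1-based indices), and
`G_{w s_i}(x;y) = ∂^β_i G_w(x;y)` whenever `ℓ(w s_i) = ℓ(w) - 1`
(the β-divided difference acting on the x-variables). -/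
def IsGroth [Field F] (M : ℕ) (β : F)
    (G : Equiv.Perm (Fin (M + 1)) → (Fin (M + 1) → F) → (Fin (M + 1) → F) → F) : Prop :=
  (∀ x y : Fin (M + 1) → F,
      G (omegaPerm (M + 1)) x y =
        ∏ p ∈ Finset.univ.filter
            (fun p : Fin (M + 1) × Fin (M + 1) => (p.1 : ℕ) + (p.2 : ℕ) + 2 ≤ M + 1),
          (x p.1 + y p.2 + β * x p.1 * y p.2)) ∧
  (∀ (w : Equiv.Perm (Fin (M + 1))) (i : Fin M) (x y : Fin (M + 1) → F),
      permLength (w * Equiv.swap i.castSucc i.succ) + 1 = permLength w →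
      x i.castSucc ≠ x i.succ →
      G (w * Equiv.swap i.castSucc i.succ) x y =
        ((1 + β * x i.succ) * G w x y -
            (1 + β * x i.castSucc) * G w (fun j => x (Equiv.swap i.castSucc i.succ j)) y) /
          (x i.castSucc - x i.succ))

/-- The nested Bethe ansatz states.  `psi β k σ j m` is the Bethe state of the
level-`m` system, a `GL(j+2)` model on `k m` sites with equivariant parameters
`σ m` and spectral parameters `σ (m+1)`.  The base case (`j = 0`) is the `GL(2)`
state `B_1(σ^{(m+1)}_1) ⋯ B_1(σ^{(m+1)}_{k(m+1)}) |Ω⟩`, and the recursion step is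
`|ψ^{(m)}⟩ = ∑_i ⟨i|ψ^{(m+1)}⟩ · B_{i_1}(σ^{(m+1)}_1) ⋯ B_{i_{k(m+1)}}(σ^{(m+1)}_{k(m+1)}) |Ω⟩`
(the basis label `i_s ∈ {0,…,j}` of the level-`(m+1)` space corresponding to the
operator `B_{i_s+1}` of the level-`m` system). -/
def psi [Field F] (β : F) (k : ℕ → ℕ) (σ : (l : ℕ) → Fin (k l) → F) :
    (j m : ℕ) → (Fin (k m) → Fin (j + 2)) → F
  | 0, m =>
      Matrix.mulVec
        ((List.ofFn fun a : Fin (k (m + 1)) =>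
            blockOp 2 (k m) β (σ (m + 1) a) (σ m) 0 1).prod)
        (ket 2 (k m) fun _ => 0)
  | j + 1, m => fun s =>
      ∑ i : Fin (k (m + 1)) → Fin (j + 2),
        psi β k σ j (m + 1) i *
          Matrix.mulVec
            ((List.ofFn fun a : Fin (k (m + 1)) =>
                blockOp (j + 3) (k m) β (σ (m + 1) a) (σ m) 0 ((i a).succ)).prod)
            (ket (j + 3) (k m) fun _ => 0) s


section Ops
variable {I : Type*} [DecidableEq I]

/-- The operator `R_{ij}` acting on vectors indexed by colourings of the lines `I`. -/
def Rop [Field F] (β z : F) (i j : I) : Module.End F ((I → ℕ) → F) where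
  toFun φ c := if c j < c i then (1 + β * z) * φ (c ∘ Equiv.swap i j) + z * φ c
    else φ (c ∘ Equiv.swap i j)
  map_add' φ ψ := by
    funext c
    simp only [Pi.add_apply]
    split_ifs <;> ring
  map_smul' a φ := by
    funext c
    simp only [Pi.smul_apply, smul_eq_mul, RingHom.id_apply]
    split_ifs <;> ring

theorem Rop_apply [Field F] (β z : F) (i j : I) (φ : (I → ℕ) → F) (c : I → ℕ) :
    Rop β z i j φ c = if c j < c i then (1 + β * z) * φ (c ∘ Equiv.swap i j) + z * φ c
    else φ (c ∘ Equiv.swap i j) := rfl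

/-- Permutation of the lines. -/
def Pop [Field F] (e : Equiv.Perm I) : Module.End F ((I → ℕ) → F) where
  toFun φ c := φ (c ∘ e)
  map_add' φ ψ := by
    funext c
    simp only [Pi.add_apply]
  map_smul' a φ := by
    funext c
    simp only [Pi.smul_apply, smul_eq_mul, RingHom.id_apply]

theorem Pop_apply [Field F] (e : Equiv.Perm I) (φ : (I → ℕ) → F) (c : I → ℕ) :
    Pop e φ c = φ (c ∘ e) := rfl

theorem Pop_mul_Rop [Field F] (β z : F) (e : Equiv.Perm I) (i j : I) :
    Pop e * Rop β z i j = Rop β z (e i) (e j) * Pop e := by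
  ext1 φ
  funext c
  have h : c ∘ e ∘ Equiv.swap i j = (c ∘ Equiv.swap (e i) (e j)) ∘ e := by
    funext l
    simp only [Function.comp_apply]
    congr 1
    have := congrArg (fun f : Equiv.Perm I => f l) (Equiv.mul_swap_eq_swap_mul e i j)
    simpa using this
  simp only [Module.End.mul_apply, Rop_apply, Pop_apply, Function.comp_assoc, h]
  simp only [Function.comp_apply]

/-- The state `c` with values at `i, j, k` replaced. -/
def upd3 (i j k : I) (c : I → ℕ) (p q r : ℕ) : I → ℕ :=
  fun l => if l = i then p else if l = j then q else if l = k then r else c l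

theorem upd3_swap12 {i j k : I} (hij : i ≠ j) (hik : i ≠ k) (hjk : j ≠ k) (c : I → ℕ)
    (p q r : ℕ) : upd3 i j k c p q r ∘ Equiv.swap i j = upd3 i j k c q p r := by
  funext l
  simp only [upd3, Function.comp_apply, Equiv.swap_apply_def]
  split_ifs <;> simp_all

theorem upd3_swap13 {i j k : I} (hij : i ≠ j) (hik : i ≠ k) (hjk : j ≠ k) (c : I → ℕ)
    (p q r : ℕ) : upd3 i j k c p q r ∘ Equiv.swap i k = upd3 i j k c r q p := by
  funext l
  simp only [upd3, Function.comp_apply, Equiv.swap_apply_def]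
  split_ifs <;> simp_all

theorem upd3_swap23 {i j k : I} (hij : i ≠ j) (hik : i ≠ k) (hjk : j ≠ k) (c : I → ℕ)
    (p q r : ℕ) : upd3 i j k c p q r ∘ Equiv.swap j k = upd3 i j k c p r q := by
  funext l
  simp only [upd3, Function.comp_apply, Equiv.swap_apply_def]
  split_ifs <;> simp_all

theorem ybe_aux [Field F] (β a b : F) {i j k : I} (hij : i ≠ j) (hik : i ≠ k) (hjk : j ≠ k)
    (φ : (I → ℕ) → F) (c : I → ℕ) (p q r : ℕ) :
    Rop β a i j (Rop β (a + b + β * a * b) i k (Rop β b j k φ)) (upd3 i j k c p q r) =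
    Rop β b j k (Rop β (a + b + β * a * b) i k (Rop β a i j φ)) (upd3 i j k c p q r) := by
  have e1 : ∀ p q r, upd3 i j k c p q r i = p := fun p q r => by simp [upd3]
  have e2 : ∀ p q r, upd3 i j k c p q r j = q := fun p q r => by simp [upd3, hij.symm]
  have e3 : ∀ p q r, upd3 i j k c p q r k = r := fun p q r => by
    simp [upd3, hik.symm, hjk.symm]
  simp only [Rop_apply, upd3_swap12 hij hik hjk, upd3_swap13 hij hik hjk,
    upd3_swap23 hij hik hjk, e1, e2, e3]
  rcases lt_trichotomy p q with h1 | h1 | h1 <;> rcases lt_trichotomy p r with h2 | h2 | h2 <;>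
    rcases lt_trichotomy q r with h3 | h3 | h3 <;> first | omega | skip
  all_goals
    try subst h1
    try subst h2
    try subst h3
    simp only [lt_irrefl, if_true, if_false, *, lt_asymm]
    try ring

theorem ybe [Field F] (β a b : F) {i j k : I} (hij : i ≠ j) (hik : i ≠ k) (hjk : j ≠ k) :
    Rop β a i j * (Rop β (a + b + β * a * b) i k * Rop β b j k) =
    Rop β b j k * (Rop β (a + b + β * a * b) i k * Rop β a i j) := by
  ext1 φ
  funext c
  have h : c = upd3 i j k c (c i) (c j) (c k) := by
    funext l
    simp only [upd3]
    split_ifs <;> simp_all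
  simp only [Module.End.mul_apply]
  rw [h]
  exact ybe_aux β a b hij hik hjk φ c _ _ _

theorem Rop_comm [Field F] (β a b : F) {i j k l : I} (hik : i ≠ k) (hil : i ≠ l)
    (hjk : j ≠ k) (hjl : j ≠ l) :
    Rop β a i j * Rop β b k l = Rop β b k l * Rop β a i j := by
  ext1 φ
  funext c
  have h : (c ∘ Equiv.swap i j) ∘ Equiv.swap k l = (c ∘ Equiv.swap k l) ∘ Equiv.swap i j := by
    have hd : Equiv.swap i j * Equiv.swap k l = Equiv.swap k l * Equiv.swap i j := by
      apply Equiv.Perm.Disjoint.commute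
      intro x
      by_cases h1 : x = i
      · right; subst h1; exact Equiv.swap_apply_of_ne_of_ne hik hil
      · by_cases h2 : x = j
        · right; subst h2; exact Equiv.swap_apply_of_ne_of_ne hjk hjl
        · left; exact Equiv.swap_apply_of_ne_of_ne h1 h2
    funext x
    have := congrArg (fun f : Equiv.Perm I => c (f x)) hd
    simpa using this
  simp only [Module.End.mul_apply, Rop_apply, h, Function.comp_apply,
    Equiv.swap_apply_of_ne_of_ne hik hil, Equiv.swap_apply_of_ne_of_ne hjk hjl,
    Equiv.swap_apply_of_ne_of_ne hik.symm hjk.symm, Equiv.swap_apply_of_ne_of_ne hil.symm hjl.symm]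
  split_ifs <;> ring

theorem Rop_apply_eq [Field F] (β z : F) (i j : I) (φ : (I → ℕ) → F) (c : I → ℕ)
    (h : c i = c j) : Rop β z i j φ c = φ c := by
  have : c ∘ Equiv.swap i j = c := by
    funext l
    simp only [Function.comp_apply, Equiv.swap_apply_def]
    split_ifs <;> simp_all
  rw [Rop_apply, this, h]
  simp

/-- Vanishing on a swap-stable set of colourings is preserved. -/
theorem Rop_vanish [Field F] (β z : F) (i j : I) (Q : (I → ℕ) → Prop) (φ : (I → ℕ) → F)
    (hQ : ∀ c, Q c → Q (c ∘ Equiv.swap i j)) (hφ : ∀ c, Q c → φ c = 0) :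
    ∀ c, Q c → Rop β z i j φ c = 0 := by
  intro c hc
  rw [Rop_apply, hφ _ hc, hφ _ (hQ c hc)]
  simp

/-- Restriction to sub-states. -/
theorem Rop_pull [Field F] {J : Type*} [DecidableEq J] (β z : F) (f : J → I)
    (ι : (J → ℕ) → (I → ℕ)) (i j : J) (h1 : ∀ s l, ι s (f l) = s l)
    (h2 : ∀ s, ι (s ∘ Equiv.swap i j) = ι s ∘ Equiv.swap (f i) (f j)) (φ : (I → ℕ) → F) :
    (fun s => Rop β z (f i) (f j) φ (ι s)) = Rop β z i j (fun s => φ (ι s)) := by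
  funext s
  simp only [Rop_apply, h1, h2]

/-- The operator `Ř_{ij}`. -/
def Rchk [Field F] (β z : F) (i j : I) : Module.End F ((I → ℕ) → F) :=
  Pop (Equiv.swap i j) * Rop β z i j

theorem Rchk_apply [Field F] (β z : F) (i j : I) (φ : (I → ℕ) → F) (c : I → ℕ) :
    Rchk β z i j φ c = if c i < c j then (1 + β * z) * φ c + z * φ (c ∘ Equiv.swap i j)
    else φ c := by
  have : (c ∘ Equiv.swap i j) ∘ Equiv.swap i j = c := by
    funext l; simp
  simp only [Rchk, Module.End.mul_apply, Pop_apply, Rop_apply, this, Function.comp_apply,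
    Equiv.swap_apply_left, Equiv.swap_apply_right]

end Ops

theorem om_comp [Field F] (β u v w : F) (hv : 1 + β * v ≠ 0) (hw : 1 + β * w ≠ 0) :
    om β u w = om β u v + om β v w + β * om β u v * om β v w := by
  simp only [om]
  have e : (u - v) / (1 + β * v) + (v - w) / (1 + β * w)
      + β * ((u - v) / (1 + β * v)) * ((v - w) / (1 + β * w)) =
      ((u - v) * (1 + β * w) + (v - w) * (1 + β * v) + β * (u - v) * (v - w)) /
        ((1 + β * v) * (1 + β * w)) := by
    rw [← mul_div_assoc β, div_mul_div_comm, div_add_div _ _ hv hw, ← add_div]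
    congr 1
    ring
  rw [e, div_eq_div_iff hw (mul_ne_zero hv hw)]
  ring

section MonoidLists
variable {A : Type*} [Monoid A]

theorem ofFn_comm_all (X : A) : ∀ (n : ℕ) (f g : Fin n → A), (∀ i, X * f i = g i * X) →
    X * (List.ofFn f).prod = (List.ofFn g).prod * X
  | 0, f, g, _ => by simp
  | n + 1, f, g, h => by
    rw [List.ofFn_succ, List.ofFn_succ, List.prod_cons, List.prod_cons, ← mul_assoc, h 0, mul_assoc,
      ofFn_comm_all X n _ _ (fun i => h i.succ), mul_assoc]

theorem ofFn_rev_comm_all (X : A) : ∀ (n : ℕ) (f g : Fin n → A), (∀ i, X * f i = g i * X) →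
    X * (List.ofFn f).reverse.prod = (List.ofFn g).reverse.prod * X
  | 0, f, g, _ => by simp
  | n + 1, f, g, h => by
    rw [List.ofFn_succ, List.ofFn_succ, List.reverse_cons, List.reverse_cons, List.prod_append,
      List.prod_append, List.prod_singleton, List.prod_singleton, ← mul_assoc,
      ofFn_rev_comm_all X n _ _ (fun i => h i.succ), mul_assoc, h 0, mul_assoc]

theorem ofFn_comm_pair (X : A) : ∀ (n : ℕ) (f g : Fin (n + 1) → A) (j : Fin n),
    (∀ i, i ≠ j.castSucc → i ≠ j.succ → X * f i = g i * X) →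
    (X * (f j.castSucc * f j.succ) = (g j.castSucc * g j.succ) * X) →
    X * (List.ofFn f).prod = (List.ofFn g).prod * X
  | 0, f, g, j, _, _ => j.elim0
  | n + 1, f, g, j, h, hp => by
    induction j using Fin.cases with
    | zero =>
      rw [List.ofFn_succ (f := f), List.ofFn_succ (f := g), List.ofFn_succ (f := fun i => f i.succ),
        List.ofFn_succ (f := fun i => g i.succ)]
      simp only [List.prod_cons]
      rw [← mul_assoc (f 0), ← mul_assoc X]
      have e : X * (f 0 * f (Fin.succ 0)) = (g 0 * g (Fin.succ 0)) * X := hp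
      rw [e, mul_assoc _ X, ofFn_comm_all X n _ (fun i => g i.succ.succ)]
      · simp only [mul_assoc]
      · intro i
        apply h
        · simp [Fin.ext_iff]
        · simp [Fin.ext_iff]
    | succ j =>
      rw [List.ofFn_succ (f := f), List.ofFn_succ (f := g), List.prod_cons, List.prod_cons,
        ← mul_assoc, h 0, mul_assoc, ofFn_comm_pair X n _ (fun i => g i.succ) j, mul_assoc]
      · intro i h1 h2
        apply h
        · intro e; apply h1; simpa [Fin.ext_iff] using e
        · intro e; apply h2; simpa [Fin.ext_iff] using e
      · exact hp
      · simp [Fin.ext_iff]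
      · simp [Fin.ext_iff]

theorem ofFn_rev_comm_pair (X : A) : ∀ (n : ℕ) (f g : Fin (n + 1) → A) (j : Fin n),
    (∀ i, i ≠ j.castSucc → i ≠ j.succ → X * f i = g i * X) →
    (X * (f j.succ * f j.castSucc) = (g j.succ * g j.castSucc) * X) →
    X * (List.ofFn f).reverse.prod = (List.ofFn g).reverse.prod * X
  | 0, f, g, j, _, _ => j.elim0
  | n + 1, f, g, j, h, hp => by
    induction j using Fin.cases with
    | zero =>
      rw [List.ofFn_succ (f := f), List.ofFn_succ (f := g), List.ofFn_succ (f := fun i => f i.succ),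
        List.ofFn_succ (f := fun i => g i.succ)]
      simp only [List.reverse_cons, List.prod_append, List.prod_singleton]
      have e : X * (f (Fin.succ 0) * f 0) = (g (Fin.succ 0) * g 0) * X := hp
      rw [mul_assoc, ← mul_assoc X, ofFn_rev_comm_all X n _ (fun i => g i.succ.succ), mul_assoc _ X, e]
      · simp only [mul_assoc]
      · intro i
        apply h
        · simp [Fin.ext_iff]
        · simp [Fin.ext_iff]
    | succ j =>
      rw [List.ofFn_succ (f := f), List.ofFn_succ (f := g)]
      simp only [List.reverse_cons, List.prod_append, List.prod_singleton]
      rw [← mul_assoc, ofFn_rev_comm_pair X n _ (fun i => g i.succ) j, mul_assoc, h 0, mul_assoc]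
      · simp [Fin.ext_iff]
      · simp [Fin.ext_iff]
      · intro i h1 h2
        apply h
        · intro e; apply h1; simpa [Fin.ext_iff] using e
        · intro e; apply h2; simpa [Fin.ext_iff] using e
      · exact hp

theorem rtt_abstract (R : A) : ∀ (n : ℕ) (f g : Fin n → A),
    (∀ i, R * (f i * g i) = g i * f i * R) → (∀ i j, i ≠ j → f i * g j = g j * f i) →
    R * ((List.ofFn f).reverse.prod * (List.ofFn g).reverse.prod) =
      (List.ofFn g).reverse.prod * (List.ofFn f).reverse.prod * R
  | 0, f, g, _, _ => by simp
  | n + 1, f, g, h, hc => by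
    have ih := rtt_abstract R n (fun i => f i.succ) (fun i => g i.succ) (fun i => h _)
      (fun i j hij => hc _ _ (by simpa [Fin.ext_iff] using hij))
    have c1 : f 0 * (List.ofFn fun i => g (Fin.succ i)).reverse.prod =
        (List.ofFn fun i => g (Fin.succ i)).reverse.prod * f 0 :=
      ofFn_rev_comm_all (f 0) n _ _ (fun i => hc _ _ (by simp [Fin.ext_iff]))
    have c2 : g 0 * (List.ofFn fun i => f (Fin.succ i)).reverse.prod =
        (List.ofFn fun i => f (Fin.succ i)).reverse.prod * g 0 :=
      ofFn_rev_comm_all (g 0) n _ _ (fun i => (hc _ _ (by simp [Fin.ext_iff])).symm)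
    rw [List.ofFn_succ, List.ofFn_succ]
    simp only [List.reverse_cons, List.prod_append, List.prod_singleton]
    generalize (List.ofFn fun i => f (Fin.succ i)).reverse.prod = P at *
    generalize (List.ofFn fun i => g (Fin.succ i)).reverse.prod = Q at *
    calc R * (P * f 0 * (Q * g 0)) = R * (P * (f 0 * Q) * g 0) := by simp only [mul_assoc]
      _ = (R * (P * Q)) * (f 0 * g 0) := by rw [c1]; simp only [mul_assoc]
      _ = Q * P * (R * (f 0 * g 0)) := by rw [ih]; simp only [mul_assoc]
      _ = Q * (P * g 0) * f 0 * R := by rw [h]; simp only [mul_assoc]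
      _ = Q * g 0 * (P * f 0) * R := by rw [← c2]; simp only [mul_assoc]

end MonoidLists

section Mono

/-- The monodromy of the auxiliary line `a` over all sites. -/
def Tm [Field F] {K N : ℕ} (β u : F) (t : Fin N → F) (a : Fin K) :
    Module.End F ((Fin K ⊕ Fin N → ℕ) → F) :=
  ((List.ofFn fun j : Fin N => Rop β (om β u (t j)) (Sum.inl a) (Sum.inr j)).reverse).prod

/-- The product of all monodromies. -/
def Em [Field F] {K N : ℕ} (β : F) (u : Fin K → F) (t : Fin N → F) :
    Module.End F ((Fin K ⊕ Fin N → ℕ) → F) :=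
  (List.ofFn fun a : Fin K => Tm β (u a) t a).prod

theorem Rchk_site_Tm [Field F] {K n : ℕ} (β u : F) (t : Fin (n + 1) → F)
    (ht : ∀ j, 1 + β * t j ≠ 0) (j : Fin n) (a : Fin K) :
    Rchk β (om β (t j.castSucc) (t j.succ)) (Sum.inr j.castSucc) (Sum.inr j.succ) * Tm β u t a =
    Tm β u (t ∘ Equiv.swap j.castSucc j.succ) a *
      Rchk β (om β (t j.castSucc) (t j.succ)) (Sum.inr j.castSucc) (Sum.inr j.succ) := by
  have hne : j.castSucc ≠ j.succ := (Fin.castSucc_lt_succ).ne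
  apply ofFn_rev_comm_pair _ n _ _ j
  · intro i h1 h2
    rw [Rchk, mul_assoc, Rop_comm, ← mul_assoc, Pop_mul_Rop, mul_assoc]
    · rw [Equiv.swap_apply_of_ne_of_ne, Equiv.swap_apply_of_ne_of_ne, Function.comp_apply,
        Equiv.swap_apply_of_ne_of_ne h1 h2] <;> simp [h1, h2]
    all_goals simp [Ne.symm h1, Ne.symm h2]
  · have y := ybe (I := Fin K ⊕ Fin (n + 1)) β (om β u (t j.castSucc))
      (om β (t j.castSucc) (t j.succ)) (i := Sum.inl a)
      (j := Sum.inr j.castSucc) (k := Sum.inr j.succ) (by simp) (by simp) (by simpa using hne)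
    rw [← om_comp β u _ _ (ht _) (ht _)] at y
    rw [Rchk, mul_assoc, ← y, ← mul_assoc, Pop_mul_Rop, mul_assoc, ← mul_assoc (Pop _),
      Pop_mul_Rop, Equiv.swap_apply_of_ne_of_ne (by simp) (by simp)]
    simp [mul_assoc]

theorem Rchk_site_Em [Field F] {K n : ℕ} (β : F) (u : Fin K → F) (t : Fin (n + 1) → F)
    (ht : ∀ j, 1 + β * t j ≠ 0) (j : Fin n) :
    Rchk β (om β (t j.castSucc) (t j.succ)) (Sum.inr j.castSucc) (Sum.inr j.succ) * Em β u t =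
    Em β u (t ∘ Equiv.swap j.castSucc j.succ) *
      Rchk β (om β (t j.castSucc) (t j.succ)) (Sum.inr j.castSucc) (Sum.inr j.succ) := by
  apply ofFn_comm_all
  intro a
  exact Rchk_site_Tm β _ t ht j a

theorem Pop_Tm [Field F] {K N : ℕ} (β u : F) (t : Fin N → F) (a b c : Fin K) :
    Pop (Equiv.swap (Sum.inl a) (Sum.inl b)) * Tm β u t c =
      Tm β u t (Equiv.swap a b c) * Pop (Equiv.swap (Sum.inl a) (Sum.inl b)) := by
  apply ofFn_rev_comm_all
  intro i
  rw [Pop_mul_Rop, Equiv.swap_apply_of_ne_of_ne (x := Sum.inr i) (by simp) (by simp)]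
  congr 2
  simp only [Equiv.swap_apply_def, Sum.inl.injEq]
  split_ifs <;> rfl

theorem Rchk_aux_Em [Field F] {k N : ℕ} (β : F) (u : Fin (k + 1) → F) (t : Fin N → F)
    (hu : ∀ j, 1 + β * u j ≠ 0) (ht : ∀ j, 1 + β * t j ≠ 0) (a : Fin k) :
    Rchk β (om β (u a.castSucc) (u a.succ)) (Sum.inl a.castSucc) (Sum.inl a.succ) * Em β u t =
    Em β (u ∘ Equiv.swap a.castSucc a.succ) t *
      Rchk β (om β (u a.castSucc) (u a.succ)) (Sum.inl a.castSucc) (Sum.inl a.succ) := by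
  have hne : a.castSucc ≠ a.succ := (Fin.castSucc_lt_succ).ne
  apply ofFn_comm_pair _ k _ _ a
  · intro i h1 h2
    rw [Rchk, mul_assoc]
    have : Rop β (om β (u a.castSucc) (u a.succ)) (Sum.inl a.castSucc) (Sum.inl a.succ) *
        Tm β (u i) t i = Tm β (u i) t i *
        Rop β (om β (u a.castSucc) (u a.succ)) (Sum.inl a.castSucc) (Sum.inl a.succ) := by
      apply ofFn_rev_comm_all
      intro l
      apply Rop_comm <;> simp [Ne.symm h1, Ne.symm h2]
    rw [this, ← mul_assoc, Pop_Tm, Function.comp_apply, Equiv.swap_apply_of_ne_of_ne h1 h2,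
      mul_assoc]
  · have y : Rop β (om β (u a.castSucc) (u a.succ)) (Sum.inl a.castSucc) (Sum.inl a.succ) *
        (Tm β (u a.castSucc) t a.castSucc * Tm β (u a.succ) t a.succ) =
        Tm β (u a.succ) t a.succ * Tm β (u a.castSucc) t a.castSucc *
        Rop β (om β (u a.castSucc) (u a.succ)) (Sum.inl a.castSucc) (Sum.inl a.succ) := by
      apply rtt_abstract
      · intro l
        have y := ybe (I := Fin (k + 1) ⊕ Fin N) β (om β (u a.castSucc) (u a.succ))
          (om β (u a.succ) (t l)) (i := Sum.inl a.castSucc)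
          (j := Sum.inl a.succ) (k := Sum.inr l) (by simpa using hne) (by simp) (by simp)
        rw [← om_comp β _ _ _ (hu _) (ht _)] at y
        rw [y, mul_assoc]
      · intro l m hlm
        apply Rop_comm
        · simpa using hne
        · simp
        · simp
        · simpa using hlm
    rw [Rchk, mul_assoc, y]
    simp only [← mul_assoc]
    rw [Pop_Tm, mul_assoc _ (Pop _), Pop_Tm]
    simp [mul_assoc]

/-- Input vector: `ψ` (colours shifted by one) on the auxiliary lines, colour `0` on the sites. -/
def feed [Field F] {K N : ℕ} (ψ : (Fin K → ℕ) → F) : (Fin K ⊕ Fin N → ℕ) → F :=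
  fun c => if (∀ a, c (Sum.inl a) ≠ 0) ∧ (∀ j, c (Sum.inr j) = 0) then
    ψ (fun a => c (Sum.inl a) - 1) else 0

/-- The nesting step. -/
def nest [Field F] {K N : ℕ} (β : F) (u : Fin K → F) (t : Fin N → F) (ψ : (Fin K → ℕ) → F) :
    (Fin N → ℕ) → F :=
  fun s => Em β u t (feed ψ) (Sum.elim (fun _ => 0) s)

theorem elim_swap_inr {K N : ℕ} (f : Fin K → ℕ) (s : Fin N → ℕ) (i j : Fin N) :
    Sum.elim f s ∘ Equiv.swap (Sum.inr i) (Sum.inr j) = Sum.elim f (s ∘ Equiv.swap i j) := by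
  funext l
  rcases l with l | l
  · rw [Function.comp_apply, Equiv.swap_apply_of_ne_of_ne] <;> simp
  · simp only [Function.comp_apply, Equiv.swap_apply_def, Sum.inr.injEq, Sum.elim_inr]
    split_ifs <;> rfl

theorem nest_site [Field F] {K n : ℕ} (β : F) (u : Fin K → F) (t : Fin (n + 1) → F)
    (ht : ∀ j, 1 + β * t j ≠ 0) (ψ : (Fin K → ℕ) → F) (j : Fin n) (s : Fin (n + 1) → ℕ) :
    nest β u (t ∘ Equiv.swap j.castSucc j.succ) ψ s =
      if s j.castSucc < s j.succ then
        (1 + β * om β (t j.castSucc) (t j.succ)) * nest β u t ψ s +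
          om β (t j.castSucc) (t j.succ) * nest β u t ψ (s ∘ Equiv.swap j.castSucc j.succ)
      else nest β u t ψ s := by
  have h := congrArg (fun f => f (feed ψ) (Sum.elim (fun _ => 0) s)) (Rchk_site_Em β u t ht j)
  simp only [Module.End.mul_apply] at h
  have hf : Rchk β (om β (t j.castSucc) (t j.succ)) (Sum.inr j.castSucc) (Sum.inr j.succ)
      (feed (K := K) ψ) = feed ψ := by
    funext c
    rw [Rchk_apply]
    split_ifs with hc
    · have h1 : feed ψ c = 0 := by
        rw [feed, if_neg]
        rintro ⟨-, h2⟩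
        rw [h2, h2] at hc
        exact lt_irrefl _ hc
      have h2 : feed ψ (c ∘ Equiv.swap (Sum.inr j.castSucc) (Sum.inr j.succ)) = 0 := by
        rw [feed, if_neg]
        rintro ⟨-, h2⟩
        have h3 := h2 j.castSucc
        have h4 := h2 j.succ
        simp only [Function.comp_apply, Equiv.swap_apply_left, Equiv.swap_apply_right] at h3 h4
        omega
      rw [h1, h2]
      simp
    · rfl
  rw [hf, Rchk_apply, elim_swap_inr] at h
  exact h.symm

theorem nest_aux [Field F] {k N : ℕ} (β : F) (u : Fin (k + 1) → F) (t : Fin N → F)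
    (hu : ∀ j, 1 + β * u j ≠ 0) (ht : ∀ j, 1 + β * t j ≠ 0) (ψ ψ' : (Fin (k + 1) → ℕ) → F)
    (a : Fin k)
    (hψ : ∀ i, ψ' i = if i a.castSucc < i a.succ then
        (1 + β * om β (u a.castSucc) (u a.succ)) * ψ i +
          om β (u a.castSucc) (u a.succ) * ψ (i ∘ Equiv.swap a.castSucc a.succ)
      else ψ i) :
    nest β (u ∘ Equiv.swap a.castSucc a.succ) t ψ' = nest β u t ψ := by
  funext s
  have h := congrArg (fun f => f (feed ψ) (Sum.elim (fun _ => 0) s)) (Rchk_aux_Em β u t hu ht a)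
  simp only [Module.End.mul_apply] at h
  have hf : Rchk β (om β (u a.castSucc) (u a.succ)) (Sum.inl a.castSucc) (Sum.inl a.succ)
      (feed (N := N) ψ) = feed ψ' := by
    funext c
    rw [Rchk_apply]
    have hiff : ((∀ b, (c ∘ Equiv.swap (Sum.inl a.castSucc) (Sum.inl a.succ)) (Sum.inl b) ≠ 0) ∧
        (∀ j, (c ∘ Equiv.swap (Sum.inl a.castSucc) (Sum.inl a.succ)) (Sum.inr j) = 0)) ↔
        ((∀ b, c (Sum.inl b) ≠ 0) ∧ (∀ j, c (Sum.inr j) = 0)) := by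
      apply and_congr
      · constructor
        · intro h b
          have := h (Equiv.swap a.castSucc a.succ b)
          convert this using 2
          simp only [Function.comp_apply, Equiv.swap_apply_def, Sum.inl.injEq]
          split_ifs <;> simp_all
        · intro h b
          simp only [Function.comp_apply, Equiv.swap_apply_def, Sum.inl.injEq]
          split_ifs <;> simp_all
      · constructor
        · intro h b
          have := h b
          rwa [Function.comp_apply, Equiv.swap_apply_of_ne_of_ne (by simp) (by simp)] at this
        · intro h b
          rw [Function.comp_apply, Equiv.swap_apply_of_ne_of_ne (by simp) (by simp)]
          exact h b
    simp only [feed, hiff]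
    by_cases hc : (∀ b, c (Sum.inl b) ≠ 0) ∧ (∀ j, c (Sum.inr j) = 0)
    · simp only [if_pos hc, hψ]
      have h1 := hc.1 a.castSucc
      have h2 := hc.1 a.succ
      have h3 : (c (Sum.inl a.castSucc) < c (Sum.inl a.succ)) ↔
        (c (Sum.inl a.castSucc) - 1 < c (Sum.inl a.succ) - 1) := by omega
      have h4 : (fun b => (c ∘ Equiv.swap (Sum.inl a.castSucc) (Sum.inl a.succ)) (Sum.inl b) - 1) =
          (fun b => c (Sum.inl b) - 1) ∘ Equiv.swap a.castSucc a.succ := by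
        funext b
        simp only [Function.comp_apply, Equiv.swap_apply_def, Sum.inl.injEq]
        split_ifs <;> rfl
      rw [h4]
      simp only [h3]
    · simp only [if_neg hc]
      simp
  rw [hf, Rchk_apply] at h
  simpa [nest] using h.symm

end Mono

section Bridge

/-- Embedding of the first auxiliary line and the sites. -/
def iota {K N n : ℕ} (i : Fin K → ℕ) (p : Fin n × (Fin N → Fin n)) : Fin (K + 1) ⊕ Fin N → ℕ :=
  Sum.elim (Fin.cons (p.1 : ℕ) i : Fin (K + 1) → ℕ) (fun l => (p.2 l : ℕ))

theorem iota_swap {K N n : ℕ} (i : Fin K → ℕ) (p : Fin n × (Fin N → Fin n)) (j : Fin N) :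
    iota i p ∘ Equiv.swap (Sum.inl 0) (Sum.inr j) =
      iota i (p.2 j, Function.update p.2 j p.1) := by
  funext l
  rcases l with l | l
  · induction l using Fin.cases with
    | zero => simp [iota]
    | succ l =>
      rw [Function.comp_apply, Equiv.swap_apply_of_ne_of_ne] <;> simp [iota, Fin.ext_iff]
  · by_cases h : l = j
    · subst h; simp [iota]
    · rw [Function.comp_apply, Equiv.swap_apply_of_ne_of_ne] <;> simp [iota, h]

theorem Rsite_bridge [Field F] {K N n : ℕ} (β u τ : F) (i : Fin K → ℕ) (j : Fin N)
    (φ : (Fin (K + 1) ⊕ Fin N → ℕ) → F) :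
    (fun p => Rop β (om β u τ) (Sum.inl 0) (Sum.inr j) φ (iota i p)) =
      Matrix.mulVec (Rsite n N β u τ j) (fun p => φ (iota i p)) := by
  funext p
  obtain ⟨r, s⟩ := p
  have hv0 : iota i (r, s) (Sum.inl 0) = (r : ℕ) := by simp [iota]
  have hv1 : iota i (r, s) (Sum.inr j) = (s j : ℕ) := by simp [iota]
  rw [Rop_apply, hv0, hv1, iota_swap]
  simp only [Matrix.mulVec, dotProduct, Rsite, Rmat, Matrix.of_apply]
  have hsplit : ∀ q : Fin n × (Fin N → Fin n),
      ((if r = q.2 j ∧ s j = q.1 then (if q.1 < q.2 j then 1 + β * om β u τ else 1) else 0) +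
      (if r = q.1 ∧ s j = q.2 j ∧ q.2 j < q.1 then om β u τ else 0)) *
      (if ∀ l, l ≠ j → s l = q.2 l then (1 : F) else 0) * φ (iota i q) =
      (if q = (s j, Function.update s j r) then
        (if s j < r then 1 + β * om β u τ else 1) * φ (iota i q) else 0) +
      (if q = (r, s) then (if s j < r then om β u τ else 0) * φ (iota i q) else 0) := by
    rintro ⟨q1, q2⟩
    have e1 : ((q1, q2) = (s j, Function.update s j r)) ↔
        ((r = q2 j ∧ s j = q1) ∧ (∀ l, l ≠ j → s l = q2 l)) := by
      rw [Prod.mk.injEq]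
      constructor
      · rintro ⟨rfl, rfl⟩
        refine ⟨⟨by simp, rfl⟩, ?_⟩
        intro l hl
        simp [hl]
      · rintro ⟨⟨h1, h2⟩, h3⟩
        refine ⟨h2.symm, ?_⟩
        funext l
        by_cases hl : l = j
        · subst hl; simp [h1]
        · simp [hl, h3 l hl]
    have e2 : ((q1, q2) = (r, s)) ↔
        ((r = q1 ∧ s j = q2 j) ∧ (∀ l, l ≠ j → s l = q2 l)) := by
      rw [Prod.mk.injEq]
      constructor
      · rintro ⟨rfl, rfl⟩
        simp
      · rintro ⟨⟨h1, h2⟩, h3⟩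
        refine ⟨h1.symm, ?_⟩
        funext l
        by_cases hl : l = j
        · subst hl; simp [h2]
        · simp [h3 l hl]
    rw [if_congr e1 rfl rfl, if_congr e2 rfl rfl]
    by_cases h3 : ∀ l, l ≠ j → s l = q2 l
    · rw [if_pos h3]
      simp only [and_iff_left h3, mul_one, add_mul]
      congr 1
      · by_cases h4 : r = q2 j ∧ s j = q1
        · obtain ⟨h5, h6⟩ := h4
          subst h5 h6
          simp
        · simp [h4]
      · by_cases h4 : r = q1 ∧ s j = q2 j
        · obtain ⟨h5, h6⟩ := h4
          subst h5
          simp [h6]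
        · rw [if_neg h4, if_neg (fun h => h4 ⟨h.1, h.2.1⟩), zero_mul]
    · simp [h3]
  rw [Finset.sum_congr rfl (fun q _ => hsplit q), Finset.sum_add_distrib]
  simp only [Finset.sum_ite_eq', Finset.sum_ite_eq, Finset.mem_univ, if_true, Fin.lt_def]
  split_ifs <;> ring

theorem Tm_bridge [Field F] {K N n : ℕ} (β u : F) (t : Fin N → F) (i : Fin K → ℕ)
    (φ : (Fin (K + 1) ⊕ Fin N → ℕ) → F) :
    (fun p => Tm β u t (0 : Fin (K + 1)) φ (iota i p)) =
      Matrix.mulVec (Tmono n N β u t) (fun p => φ (iota i p)) := by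
  have key : ∀ l : List (Fin N),
      (fun p => (l.map fun j => Rop β (om β u (t j)) (Sum.inl (0 : Fin (K + 1))) (Sum.inr j)).prod
        φ (iota i p)) =
      Matrix.mulVec (l.map fun j => Rsite n N β u (t j) j).prod (fun p => φ (iota i p)) := by
    intro l
    induction l with
    | nil => simp
    | cons j l ih =>
      simp only [List.map_cons, List.prod_cons, Module.End.mul_apply]
      rw [Rsite_bridge, ih, Matrix.mulVec_mulVec]
  have := key (List.finRange N).reverse
  simpa only [Tm, Tmono, List.ofFn_eq_map, List.map_reverse] using this

/-- Adding a frozen first auxiliary line. -/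
def iotaS {K N : ℕ} (r : ℕ) (d : Fin K ⊕ Fin N → ℕ) : Fin (K + 1) ⊕ Fin N → ℕ :=
  Sum.elim (Fin.cons r (fun a => d (Sum.inl a)) : Fin (K + 1) → ℕ) (fun l => d (Sum.inr l))

theorem Rop_iotaS [Field F] {K N : ℕ} (β z : F) (r : ℕ) (a : Fin K) (j : Fin N)
    (φ : (Fin (K + 1) ⊕ Fin N → ℕ) → F) :
    (fun d => Rop β z (Sum.inl a.succ) (Sum.inr j) φ (iotaS r d)) =
      Rop β z (Sum.inl a) (Sum.inr j) (fun d => φ (iotaS r d)) := by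
  apply Rop_pull β z (Sum.map Fin.succ id : Fin K ⊕ Fin N → Fin (K + 1) ⊕ Fin N) (iotaS r)
    (Sum.inl a) (Sum.inr j)
  · rintro s (l | l) <;> simp [iotaS]
  · intro s
    funext l
    rcases l with l | l
    · induction l using Fin.cases with
      | zero =>
        rw [Function.comp_apply, Equiv.swap_apply_of_ne_of_ne] <;> simp [iotaS, Fin.ext_iff]
      | succ l =>
        by_cases h : l = a
        · subst h; simp [iotaS]
        · rw [Function.comp_apply, Equiv.swap_apply_of_ne_of_ne]
          · simp only [iotaS, Sum.elim_inl, Fin.cons_succ, Function.comp_apply]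
            rw [Equiv.swap_apply_of_ne_of_ne] <;> simp [h]
          · simp [h]
          · simp
    · by_cases h : l = j
      · subst h; simp [iotaS]
      · rw [Function.comp_apply, Equiv.swap_apply_of_ne_of_ne]
        · simp only [iotaS, Sum.elim_inr, Function.comp_apply]
          rw [Equiv.swap_apply_of_ne_of_ne] <;> simp [h]
        · simp
        · simp [h]

theorem list_pull {J : Type*} {X Y : Type*} [Field F] (A : J → Module.End F (X → F))
    (B : J → Module.End F (Y → F)) (ι : Y → X)
    (h : ∀ j φ, (fun d => A j φ (ι d)) = B j (fun d => φ (ι d))) (l : List J) (φ : X → F) :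
    (fun d => (l.map A).prod φ (ι d)) = (l.map B).prod (fun d => φ (ι d)) := by
  induction l with
  | nil => simp
  | cons j l ih =>
    simp only [List.map_cons, List.prod_cons, Module.End.mul_apply]
    rw [h, ih]

theorem Tm_iotaS [Field F] {K N : ℕ} (β u : F) (t : Fin N → F) (r : ℕ) (a : Fin K)
    (φ : (Fin (K + 1) ⊕ Fin N → ℕ) → F) :
    (fun d => Tm β u t a.succ φ (iotaS r d)) = Tm β u t a (fun d => φ (iotaS r d)) := by
  have := list_pull (fun j : Fin N => Rop β (om β u (t j)) (Sum.inl a.succ) (Sum.inr j))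
    (fun j : Fin N => Rop β (om β u (t j)) (Sum.inl a) (Sum.inr j)) (iotaS r)
    (fun j φ => Rop_iotaS β _ r a j φ) (List.finRange N).reverse φ
  simpa only [Tm, List.ofFn_eq_map, List.map_reverse] using this

theorem Em_iotaS [Field F] {K N : ℕ} (β : F) (u : Fin K → F) (t : Fin N → F) (r : ℕ)
    (φ : (Fin (K + 1) ⊕ Fin N → ℕ) → F) :
    (fun d => (List.ofFn fun a : Fin K => Tm β (u a) t a.succ).prod φ (iotaS r d)) =
      Em β u t (fun d => φ (iotaS r d)) := by
  have := list_pull (fun a : Fin K => Tm β (u a) t a.succ)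
    (fun a : Fin K => Tm β (u a) t a) (iotaS r)
    (fun j φ => Tm_iotaS β _ t r j φ) (List.finRange K) φ
  simpa only [Em, List.ofFn_eq_map] using this

theorem Em_bridge [Field F] {N n : ℕ} (β : F) (t : Fin N → F) : ∀ (K : ℕ) (u : Fin K → F)
    (φ : (Fin K ⊕ Fin N → ℕ) → F) (s : Fin N → Fin (n + 1)),
    Em β u t φ (Sum.elim (fun _ => 0) (fun l => (s l : ℕ))) =
      ∑ i : Fin K → Fin (n + 1),
        Matrix.mulVec ((List.ofFn fun a => blockOp (n + 1) N β (u a) t 0 (i a)).prod)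
          (fun s' => φ (Sum.elim (fun a => (i a : ℕ)) (fun l => (s' l : ℕ)))) s
  | 0, u, φ, s => by
    simp only [Em, List.ofFn_zero, List.prod_nil, Module.End.one_apply, Finset.univ_unique,
      Finset.sum_singleton, Matrix.one_mulVec]
    congr 2
    funext a
    exact a.elim0
  | K + 1, u, φ, s => by
    have hT := congrFun (Tm_bridge (n := n + 1) β (u 0) t (fun _ : Fin K => 0)
      ((List.ofFn fun a : Fin K => Tm β (u a.succ) t a.succ).prod φ)) (0, s)
    have e0 : iota (fun _ : Fin K => 0) ((0 : Fin (n + 1)), s) =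
        Sum.elim (fun _ => 0) (fun l => (s l : ℕ)) := by
      funext l
      rcases l with l | l
      · induction l using Fin.cases <;> simp [iota]
      · simp [iota]
    rw [Em, List.ofFn_succ, List.prod_cons, Module.End.mul_apply, ← e0, hT]
    have e1 : ∀ p : Fin (n + 1) × (Fin N → Fin (n + 1)),
        (List.ofFn fun a : Fin K => Tm β (u a.succ) t a.succ).prod φ (iota (fun _ => 0) p) =
        ∑ i : Fin K → Fin (n + 1),
        Matrix.mulVec ((List.ofFn fun a => blockOp (n + 1) N β (u a.succ) t 0 (i a)).prod)
          (fun s' => φ (Sum.elim (fun a => ((Fin.cons p.1 i : Fin (K + 1) → Fin (n + 1)) a : ℕ))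
            (fun l => (s' l : ℕ)))) p.2 := by
      intro p
      have h1 := congrFun (Em_iotaS β (fun a => u a.succ) t (p.1 : ℕ) φ)
        (Sum.elim (fun _ => 0) (fun l => (p.2 l : ℕ)))
      have h2 : iota (fun _ : Fin K => 0) p =
        iotaS (p.1 : ℕ) (Sum.elim (fun _ => 0) (fun l => (p.2 l : ℕ))) := rfl
      rw [h2, h1, Em_bridge β t K]
      apply Finset.sum_congr rfl
      intro i _
      congr 1
      congr 1
      funext s'
      congr 1
      funext l
      rcases l with l | l
      · induction l using Fin.cases <;> simp [iotaS]
      · simp [iotaS]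
    rw [Matrix.mulVec, dotProduct]
    simp only [e1]
    rw [← (Fin.consEquiv (fun _ : Fin (K + 1) => Fin (n + 1))).sum_comp, Fintype.sum_prod_type,
      Fintype.sum_prod_type]
    apply Finset.sum_congr rfl
    intro c _
    simp only [Finset.mul_sum]
    rw [Finset.sum_comm]
    apply Finset.sum_congr rfl
    intro i _
    rw [List.ofFn_succ, List.prod_cons, ← Matrix.mulVec_mulVec]
    rfl

theorem nest_bridge [Field F] {K N n : ℕ} (β : F) (u : Fin K → F) (t : Fin N → F)
    (ψ : (Fin K → ℕ) → F) (s : Fin N → Fin (n + 1)) :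
    nest β u t ψ (fun l => (s l : ℕ)) =
      ∑ i : Fin K → Fin n, ψ (fun a => (i a : ℕ)) *
        Matrix.mulVec ((List.ofFn fun a => blockOp (n + 1) N β (u a) t 0 (i a).succ).prod)
          (ket (n + 1) N fun _ => 0) s := by
  rw [nest, Em_bridge (n := n)]
  symm
  apply Finset.sum_of_injOn (fun (i : Fin K → Fin n) a => (i a).succ)
  · intro i _ i' _ h
    funext a
    exact Fin.succ_injective _ (congrFun h a)
  · intro i _
    simp
  · intro i _ hi
    have : (fun s' : Fin N → Fin (n + 1) =>
        feed ψ (Sum.elim (fun a => (i a : ℕ)) (fun l => (s' l : ℕ)))) = (0 : (Fin N → Fin (n + 1)) → F) := by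
      funext s'
      rw [feed, if_neg]
      · rfl
      rintro ⟨h, -⟩
      apply hi
      have h' : ∀ a, i a ≠ 0 := fun a e => h a (by simp [e])
      refine ⟨fun a => (i a).pred (h' a), by simp, ?_⟩
      funext a
      simp
    rw [this, Matrix.mulVec_zero]
    rfl
  · intro i _
    have : (fun s' : Fin N → Fin (n + 1) =>
        feed ψ (Sum.elim (fun a => ((i a).succ : ℕ)) (fun l => (s' l : ℕ)))) =
        ψ (fun a => (i a : ℕ)) • ket (n + 1) N fun _ => 0 := by
      funext s'
      by_cases h : s' = fun _ => 0
      · subst h; simp [feed, ket]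
      · rw [Pi.smul_apply, ket, if_neg h, feed, if_neg, smul_zero]
        rintro ⟨-, h2⟩
        apply h
        funext l
        exact Fin.ext (h2 l)
    rw [this, Matrix.mulVec_smul]
    rfl

end Bridge

section Components

theorem rowEval [Field F] {X : Type*} : ∀ (N : ℕ) (R : Fin N → Module.End F (X → F)) (d : ℕ → X)
    (wt : Fin N → F) (V : ℕ → (X → F) → Prop) (φ : X → F),
    (∀ (i : Fin N) χ, V i χ → V (i + 1) (R i χ)) →
    (∀ (i : Fin N) χ, V i χ → R i χ (d (i + 1)) = wt i * χ (d i)) → V 0 φ →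
    V N ((List.ofFn R).reverse.prod φ) ∧
      (List.ofFn R).reverse.prod φ (d N) = (∏ i, wt i) * φ (d 0)
  | 0, R, d, wt, V, φ, _, _, h => by simpa using h
  | N + 1, R, d, wt, V, φ, h1, h2, h3 => by
    obtain ⟨ih1, ih2⟩ := rowEval N (fun i => R i.castSucc) d (fun i => wt i.castSucc) V φ
      (fun i χ h => h1 i.castSucc χ h) (fun i χ h => h2 i.castSucc χ h) h3
    have e : (List.ofFn R).reverse.prod =
        R (Fin.last N) * (List.ofFn fun i : Fin N => R i.castSucc).reverse.prod := by
      rw [List.ofFn_succ', List.concat_eq_append, List.reverse_append]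
      simp
    rw [e, Module.End.mul_apply]
    refine ⟨h1 (Fin.last N) _ ih1, ?_⟩
    have := h2 (Fin.last N) _ ih1
    simp only [Fin.val_last] at this
    rw [this, ih2, Fin.prod_univ_castSucc]
    ring

theorem colEval [Field F] {X : Type*} : ∀ (K : ℕ) (T : Fin K → Module.End F (X → F)) (D : ℕ → X)
    (W : Fin K → F) (V : ℕ → (X → F) → Prop) (φ : X → F),
    (∀ (i : Fin K) χ, V (i + 1) χ → V i (T i χ)) →
    (∀ (i : Fin K) χ, V (i + 1) χ → T i χ (D i) = W i * χ (D (i + 1))) → V K φ →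
    V 0 ((List.ofFn T).prod φ) ∧
      (List.ofFn T).prod φ (D 0) = (∏ i, W i) * φ (D K)
  | 0, R, d, wt, V, φ, _, _, h => by simpa using h
  | K + 1, T, D, W, V, φ, h1, h2, h3 => by
    obtain ⟨ih1, ih2⟩ := colEval K (fun i => T i.succ) (fun m => D (m + 1)) (fun i => W i.succ)
      (fun m => V (m + 1)) φ
      (fun i χ h => h1 i.succ χ h) (fun i χ h => h2 i.succ χ h) h3
    rw [List.ofFn_succ, List.prod_cons, Module.End.mul_apply]
    refine ⟨h1 0 _ ih1, ?_⟩
    have := h2 0 _ ih1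
    simp only [Fin.val_zero] at this
    rw [this, ih2, Fin.prod_univ_succ]
    ring

theorem list_vanish [Field F] {X : Type*} (V : (X → F) → Prop)
    (l : List (Module.End F (X → F))) (h : ∀ A ∈ l, ∀ φ, V φ → V (A φ)) (φ : X → F) (hφ : V φ) :
    V (l.prod φ) := by
  induction l with
  | nil => simpa using hφ
  | cons A l ih =>
    rw [List.prod_cons, Module.End.mul_apply]
    apply h A (by simp)
    apply ih
    intro B hB
    exact h B (by simp [hB])

/-- The reference state of the auxiliary lines. -/
def refv [Field F] (K : ℕ) : (Fin K → ℕ) → F :=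
  fun i => if ∀ a, i a + a + 1 = K then 1 else 0

/-- The Bethe vector `B_{K}(u_1) ⋯ B_1(u_K) |Ω⟩`. -/
def Psi [Field F] {K N : ℕ} (β : F) (u : Fin K → F) (t : Fin N → F) : (Fin N → ℕ) → F :=
  nest β u t (refv K)

theorem feed_refv [Field F] {K N : ℕ} (c : Fin K ⊕ Fin N → ℕ) :
    feed (F := F) (refv K) c =
      if (∀ a : Fin K, c (Sum.inl a) = K - a) ∧ (∀ j, c (Sum.inr j) = 0) then 1 else 0 := by
  have key : ((∀ a : Fin K, c (Sum.inl a) ≠ 0) ∧ (∀ j, c (Sum.inr j) = 0)) ∧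
      (∀ a : Fin K, c (Sum.inl a) - 1 + a + 1 = K) ↔
      (∀ a : Fin K, c (Sum.inl a) = K - a) ∧ (∀ j, c (Sum.inr j) = 0) := by
    constructor
    · rintro ⟨⟨h3, h2⟩, h⟩
      refine ⟨fun a => ?_, h2⟩
      have := h a
      have := h3 a
      omega
    · rintro ⟨h1, h2⟩
      refine ⟨⟨fun a => ?_, h2⟩, fun a => ?_⟩
      · have := h1 a
        have := a.isLt
        omega
      · have := h1 a
        have := a.isLt
        omega
  rw [feed, refv, ← ite_and]
  exact if_congr key rfl rfl

theorem Tm_vanish [Field F] {K N : ℕ} (β u : F) (t : Fin N → F) (a : Fin K)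
    (Q : (Fin K ⊕ Fin N → ℕ) → Prop) (φ : (Fin K ⊕ Fin N → ℕ) → F)
    (hQ : ∀ (j : Fin N) c, Q c → Q (c ∘ Equiv.swap (Sum.inl a) (Sum.inr j)))
    (hφ : ∀ c, Q c → φ c = 0) :
    ∀ c, Q c → Tm β u t a φ c = 0 := by
  apply list_vanish (fun φ => ∀ c, Q c → φ c = 0) _ _ _ hφ
  intro A hA χ hχ
  rw [List.mem_reverse, List.mem_ofFn] at hA
  obtain ⟨j, rfl⟩ := hA
  exact Rop_vanish β _ _ _ Q χ (hQ j) hχ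

theorem Em_vanish [Field F] {K N : ℕ} (β : F) (u : Fin K → F) (t : Fin N → F)
    (Q : (Fin K ⊕ Fin N → ℕ) → Prop) (φ : (Fin K ⊕ Fin N → ℕ) → F)
    (hQ : ∀ (a : Fin K) (j : Fin N) c, Q c → Q (c ∘ Equiv.swap (Sum.inl a) (Sum.inr j)))
    (hφ : ∀ c, Q c → φ c = 0) :
    ∀ c, Q c → Em β u t φ c = 0 := by
  apply list_vanish (fun φ => ∀ c, Q c → φ c = 0) _ _ _ hφ
  intro A hA χ hχ
  rw [List.mem_ofFn] at hA
  obtain ⟨a, rfl⟩ := hA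
  exact Tm_vanish β _ t a Q χ (hQ a) hχ

/-- Support of the Bethe vector. -/
theorem Psi_support [Field F] {K : ℕ} (β : F) (u : Fin K → F) (t : Fin (K + 1) → F)
    (s : Fin (K + 1) → ℕ) (hs : Psi β u t s ≠ 0) :
    ∃ p : Equiv.Perm (Fin (K + 1)), s = fun l => (p l : ℕ) := by
  let c0 : Fin K ⊕ Fin (K + 1) → ℕ := Sum.elim (fun a => K - a) (fun _ => 0)
  have h : ∃ π : Equiv.Perm (Fin K ⊕ Fin (K + 1)), Sum.elim (fun _ => 0) s = c0 ∘ π := by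
    by_contra hcon
    apply hs
    refine Em_vanish β u t (fun c => ¬ ∃ π : Equiv.Perm (Fin K ⊕ Fin (K + 1)), c = c0 ∘ π) _ ?_ ?_ _
      hcon
    · rintro a j c hc ⟨π, hπ⟩
      apply hc
      refine ⟨π * Equiv.swap (Sum.inl a) (Sum.inr j), ?_⟩
      have : c = (c ∘ Equiv.swap (Sum.inl a) (Sum.inr j)) ∘ Equiv.swap (Sum.inl a) (Sum.inr j) := by
        funext l; simp
      rw [this, hπ]
      rfl
    · intro c hc
      rw [feed_refv, if_neg]
      rintro ⟨h1, h2⟩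
      apply hc
      refine ⟨1, ?_⟩
      funext l
      rcases l with l | l
      · simp [c0, h1]
      · simp [c0, h2]
  obtain ⟨π, hπ⟩ := h
  have hs' : ∀ j, s j = c0 (π (Sum.inr j)) := fun j => congrFun hπ (Sum.inr j)
  have h0 : ∀ a, 0 = c0 (π (Sum.inl a)) := fun j => congrFun hπ (Sum.inl j)
  have hlt : ∀ j, s j < K + 1 := by
    intro j
    rw [hs']
    rcases π (Sum.inr j) with l | l
    · simp only [c0, Sum.elim_inl]; omega
    · simp [c0]
  have hinj : ∀ i j, s i = s j → s i ≠ 0 → i = j := by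
    intro i j hij hi
    rw [hs' i, hs' j] at hij
    rw [hs' i] at hi
    have key : π (Sum.inr i) = π (Sum.inr j) := by
      revert hij hi
      rcases π (Sum.inr i) with l | l <;> rcases π (Sum.inr j) with m | m
      · simp only [c0, Sum.elim_inl]
        intro h1 h2
        congr 1
        ext
        omega
      · simp only [c0, Sum.elim_inl, Sum.elim_inr]
        intro h1 h2
        exact absurd h1 h2
      · simp [c0]
      · simp [c0]
    simpa using π.injective key
  have hsurj : Function.Surjective (fun l => (⟨s l, hlt l⟩ : Fin (K + 1))) := by
    intro v
    by_cases hv : (v : ℕ) = 0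
    · by_contra hcon
      have hne : ∀ l, s l ≠ 0 := by
        intro l hl
        exact hcon ⟨l, by ext; simp [hl, hv]⟩
      have hi : Function.Injective (fun l => (⟨s l, hlt l⟩ : Fin (K + 1))) := by
        intro i j hij
        exact hinj i j (by simpa using hij) (hne i)
      exact hcon (Finite.surjective_of_injective hi v)
    · have hvlt := v.isLt
      obtain ⟨l, hl⟩ := π.surjective (Sum.inl ⟨K - v, by omega⟩)
      rcases l with l | l
      · have := h0 l
        rw [hl] at this
        simp only [c0, Sum.elim_inl] at this
        omega
      · refine ⟨l, ?_⟩
        ext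
        simp only [hs', hl, c0, Sum.elim_inl]
        omega
  have hbij := Finite.injective_iff_bijective.mp (Finite.injective_iff_surjective.mpr hsurj)
  exact ⟨Equiv.ofBijective _ hbij, rfl⟩

/-- The component `|K, K-1, …, 0⟩`. -/
theorem Psi_id [Field F] {K : ℕ} (β : F) (u : Fin K → F) (t : Fin (K + 1) → F) :
    Psi β u t (fun l => K - l) = 1 := by
  let D : ℕ → (Fin K ⊕ Fin (K + 1) → ℕ) := fun a =>
    Sum.elim (fun b => if (b : ℕ) < a then K - b else 0) (fun j => K - a - j)
  let d : ℕ → ℕ → (Fin K ⊕ Fin (K + 1) → ℕ) := fun a i =>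
    Sum.elim (fun b => if (b : ℕ) < a then K - b else if (b : ℕ) = a then K - a - i else 0)
      (fun j => if (j : ℕ) < i then K - a - j else K - a - (j + 1))
  have hrow : ∀ (a : Fin K) (χ : (Fin K ⊕ Fin (K + 1) → ℕ) → F),
      Tm β (u a) t a χ (D a) = 1 * χ (D (a + 1)) := by
    intro a χ
    have e1 : D a = d a (K + 1) := by
      funext l
      rcases l with l | l
      · simp only [D, d, Sum.elim_inl]
        split_ifs <;> omega
      · simp only [D, d, Sum.elim_inr]
        split_ifs <;> omega
    have e2 : D (a + 1) = d a 0 := by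
      funext l
      rcases l with l | l
      · simp only [D, d, Sum.elim_inl]
        split_ifs <;> omega
      · simp only [D, d, Sum.elim_inr]
        split_ifs <;> omega
    have := (rowEval (K + 1) (fun j => Rop β (om β (u a) (t j)) (Sum.inl a) (Sum.inr j)) (d a)
      (fun _ => 1) (fun _ _ => True) χ (fun _ _ _ => trivial) ?_ trivial).2
    · rw [e1, e2]
      simpa [Tm] using this
    · intro i χ _
      rw [Rop_apply, if_neg, one_mul]
      · congr 1
        funext l
        rcases l with l | l
        · by_cases h : l = a
          · subst h
            simp [d]
          · rw [Function.comp_apply, Equiv.swap_apply_of_ne_of_ne (by simpa using h) (by simp)]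
            simp only [d, Sum.elim_inl]
            have : (l : ℕ) ≠ a := fun e => h (Fin.ext e)
            simp [this]
        · by_cases h : l = i
          · subst h
            simp [d]
          · rw [Function.comp_apply, Equiv.swap_apply_of_ne_of_ne (by simp) (by simpa using h)]
            simp only [d, Sum.elim_inr]
            have : (l : ℕ) ≠ i := fun e => h (Fin.ext e)
            split_ifs <;> omega
      · simp [d]
        omega
  have := (colEval K (fun a => Tm β (u a) t a) D (fun _ => 1) (fun _ _ => True)
    (feed (refv K)) (fun _ _ _ => trivial) (fun a χ _ => hrow a χ) trivial).2
  have e0 : (Sum.elim (fun _ => 0) (fun l => K - l) : Fin K ⊕ Fin (K + 1) → ℕ) = D 0 := by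
    funext l
    rcases l with l | l <;> simp [D]
  rw [Psi, nest, e0, Em, this, feed_refv, if_pos]
  · simp
  · constructor
    · intro a
      simp [D]
    · intro j
      simp [D]

/-- The component `|0, 1, …, K⟩`. -/
theorem Psi_top [Field F] {K : ℕ} (β : F) (u : Fin K → F) (t : Fin (K + 1) → F) :
    Psi β u t (fun l => (l : ℕ)) =
      ∏ a : Fin K, ∏ i : Fin (K + 1), if (i : ℕ) + a < K then om β (u a) (t i) else 1 := by
  let D : ℕ → (Fin K ⊕ Fin (K + 1) → ℕ) := fun a =>
    Sum.elim (fun b => if (b : ℕ) < a then K - b else 0) (fun j => if (j : ℕ) + a ≤ K then j else 0)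
  let d : ℕ → ℕ → (Fin K ⊕ Fin (K + 1) → ℕ) := fun a i =>
    Sum.elim (fun b => if (b : ℕ) < a then K - b else if (b : ℕ) = a then
        (if i + a ≤ K then K - a else 0) else 0)
      (fun j => if (j : ℕ) + a ≤ K ∧ ((j : ℕ) < i ∨ (j : ℕ) + a < K) then j else 0)
  have hrow : ∀ (a : Fin K) (χ : (Fin K ⊕ Fin (K + 1) → ℕ) → F),
      (∀ b : Fin K, (b : ℕ) < a + 1 → ∀ c, c (Sum.inl b) ≠ K - b → χ c = 0) →
      Tm β (u a) t a χ (D a) =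
        (∏ i : Fin (K + 1), if (i : ℕ) + a < K then om β (u a) (t i) else 1) * χ (D (a + 1)) := by
    intro a χ hχ
    have e1 : D a = d a (K + 1) := by
      funext l
      rcases l with l | l
      · simp only [D, d, Sum.elim_inl]
        split_ifs <;> omega
      · simp only [D, d, Sum.elim_inr]
        split_ifs <;> omega
    have e2 : D (a + 1) = d a 0 := by
      funext l
      rcases l with l | l
      · simp only [D, d, Sum.elim_inl]
        split_ifs <;> omega
      · simp only [D, d, Sum.elim_inr]
        split_ifs <;> omega
    have := (rowEval (K + 1) (fun j => Rop β (om β (u a) (t j)) (Sum.inl a) (Sum.inr j)) (d a)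
      (fun i => if (i : ℕ) + a < K then om β (u a) (t i) else 1)
      (fun i χ => ∀ c, (c (Sum.inl a) ≠ K - a ∧
        ∀ j : Fin (K + 1), (j : ℕ) < i → c (Sum.inr j) ≠ K - a) → χ c = 0) χ ?_ ?_ ?_).2
    · rw [e1, e2]
      simpa [Tm] using this
    · intro i χ hχ c hc
      have h1 : χ c = 0 := hχ c ⟨hc.1, fun j hj => hc.2 j (by omega)⟩
      have h2 : χ (c ∘ Equiv.swap (Sum.inl a) (Sum.inr i)) = 0 := by
        apply hχ
        constructor
        · simpa using hc.2 i (by omega)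
        · intro j hj
          have : j ≠ i := fun e => by rw [e] at hj; omega
          rw [Function.comp_apply, Equiv.swap_apply_of_ne_of_ne (by simp) (by simpa using this)]
          exact hc.2 j (by omega)
      rw [Rop_apply, h1, h2]
      simp
    · intro i χ hχ
      have ha := a.isLt
      have hia : d a (i + 1) (Sum.inl a) = if (i : ℕ) + 1 + a ≤ K then K - a else 0 := by
        simp [d]
      have hii : d a (i + 1) (Sum.inr i) = if (i : ℕ) + a ≤ K then (i : ℕ) else 0 := by
        simp [d]
      rcases lt_trichotomy ((i : ℕ) + a) K with h | h | h
      · have ed : d a (i + 1) = d a i := by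
          funext l
          rcases l with l | l
          · simp only [d, Sum.elim_inl]
            split_ifs <;> omega
          · simp only [d, Sum.elim_inr]
            split_ifs <;> omega
        rw [if_pos (by omega)] at hia hii
        rw [if_pos h, Rop_apply, if_pos (by rw [hia, hii]; omega),
          hχ (d a (i + 1) ∘ Equiv.swap (Sum.inl a) (Sum.inr i)), ed]
        · ring
        · constructor
          · simp only [Function.comp_apply, Equiv.swap_apply_left, hii]
            omega
          · intro j hj
            have : j ≠ i := fun e => by rw [e] at hj; omega
            rw [Function.comp_apply, Equiv.swap_apply_of_ne_of_ne (by simp) (by simpa using this)]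
            simp only [d, Sum.elim_inr]
            split_ifs <;> omega
      · rw [if_neg (by omega)] at hia
        rw [if_pos (by omega)] at hii
        rw [if_neg (by omega), one_mul, Rop_apply, if_neg (by rw [hia]; omega)]
        congr 1
        funext l
        rcases l with l | l
        · by_cases hl : l = a
          · subst hl
            simp only [Function.comp_apply, Equiv.swap_apply_left, hii]
            simp only [d, Sum.elim_inl]
            split_ifs <;> omega
          · rw [Function.comp_apply, Equiv.swap_apply_of_ne_of_ne (by simpa using hl) (by simp)]
            simp only [d, Sum.elim_inl]
            have : (l : ℕ) ≠ a := fun e => hl (Fin.ext e)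
            simp [this]
        · by_cases hl : l = i
          · subst hl
            simp only [Function.comp_apply, Equiv.swap_apply_right, hia]
            simp only [d, Sum.elim_inr]
            split_ifs <;> omega
          · rw [Function.comp_apply, Equiv.swap_apply_of_ne_of_ne (by simp) (by simpa using hl)]
            simp only [d, Sum.elim_inr]
            have : (l : ℕ) ≠ i := fun e => hl (Fin.ext e)
            split_ifs <;> omega
      · have ed : d a (i + 1) = d a i := by
          funext l
          rcases l with l | l
          · simp only [d, Sum.elim_inl]
            split_ifs <;> omega
          · simp only [d, Sum.elim_inr]
            split_ifs <;> omega
        rw [if_neg (by omega)] at hia hii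
        rw [if_neg (by omega), one_mul, Rop_apply_eq, ed]
        rw [hia, hii]
    · intro c hc
      exact hχ a (by omega) c hc.1
  have := (colEval K (fun a => Tm β (u a) t a) D
    (fun a => ∏ i : Fin (K + 1), if (i : ℕ) + a < K then om β (u a) (t i) else 1)
    (fun m χ => ∀ b : Fin K, (b : ℕ) < m → ∀ c, c (Sum.inl b) ≠ K - b → χ c = 0)
    (feed (refv K)) ?_ hrow ?_).2
  · have e0 : (Sum.elim (fun _ => 0) (fun l => (l : ℕ)) : Fin K ⊕ Fin (K + 1) → ℕ) = D 0 := by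
      funext l
      rcases l with l | l
      · simp [D]
      · simp only [D, Sum.elim_inr]
        rw [if_pos]
        omega
    rw [Psi, nest, e0, Em, this, feed_refv, if_pos, mul_one]
    constructor
    · intro a
      simp [D]
    · intro j
      simp [D]
  · intro a χ hχ b hb
    apply Tm_vanish β (u a) t a (fun c => c (Sum.inl b) ≠ K - b)
    · intro j c hc
      have : b ≠ a := fun e => by rw [e] at hb; omega
      rw [Function.comp_apply, Equiv.swap_apply_of_ne_of_ne (by simpa using this) (by simp)]
      exact hc
    · exact hχ b (by omega)
  · intro b _ c hc
    rw [feed_refv, if_neg]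
    intro h
    exact hc (h.1 b)

end Components

section Perms

/-- Adjacent transposition. -/
abbrev adj {n : ℕ} (i : Fin n) : Equiv.Perm (Fin (n + 1)) := Equiv.swap i.castSucc i.succ

theorem adj_lt {n : ℕ} (i : Fin n) (a b : Fin (n + 1)) (hab : a < b)
    (h : ¬ (a = i.castSucc ∧ b = i.succ)) : adj i a < adj i b := by
  simp only [adj, Equiv.swap_apply_def, Fin.ext_iff, Fin.lt_def, Fin.val_castSucc,
    Fin.val_succ] at *
  split_ifs <;> (try simp only [Fin.val_castSucc, Fin.val_succ]) <;> omega

theorem permLength_asc {n : ℕ} (w : Equiv.Perm (Fin (n + 1))) (i : Fin n)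
    (h : w i.castSucc < w i.succ) : permLength (w * adj i) = permLength w + 1 := by
  have hs : ∀ a, adj i (adj i a) = a := fun a => Equiv.swap_apply_self _ _ _
  have e : (Finset.univ.filter fun p : Fin (n + 1) × Fin (n + 1) =>
      p.1 < p.2 ∧ (w * adj i) p.2 < (w * adj i) p.1) =
      insert (i.castSucc, i.succ)
        ((Finset.univ.filter fun p : Fin (n + 1) × Fin (n + 1) => p.1 < p.2 ∧ w p.2 < w p.1).map
          ((adj i).prodCongr (adj i)).toEmbedding) := by
    ext ⟨a, b⟩
    simp only [Finset.mem_filter, Finset.mem_univ, true_and, Finset.mem_insert, Finset.mem_map,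
      Equiv.coe_toEmbedding, Equiv.prodCongr_apply, Prod.map, Prod.exists, Prod.mk.injEq]
    simp only [Equiv.Perm.mul_apply]
    constructor
    · rintro ⟨h1, h2⟩
      by_cases hc : a = i.castSucc ∧ b = i.succ
      · exact Or.inl hc
      · exact Or.inr ⟨adj i a, adj i b, ⟨adj_lt i a b h1 hc, h2⟩, hs a, hs b⟩
    · rintro (⟨rfl, rfl⟩ | ⟨a', b', ⟨h1, h2⟩, rfl, rfl⟩)
      · refine ⟨Fin.castSucc_lt_succ, ?_⟩
        simpa [adj] using h
      · rw [hs, hs]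
        refine ⟨adj_lt i a' b' h1 ?_, h2⟩
        rintro ⟨rfl, rfl⟩
        exact absurd h2 (not_lt.mpr h.le)
  rw [permLength, e, Finset.card_insert_of_notMem, Finset.card_map, permLength]
  simp only [Finset.mem_map, Finset.mem_filter, Finset.mem_univ, true_and,
      Equiv.coe_toEmbedding, Equiv.prodCongr_apply, Prod.map, Prod.exists, Prod.mk.injEq, not_exists,
      not_and]
  rintro a b ⟨h1, h2⟩ ha hb
  have : a = i.succ := by rw [← hs a, ha]; simp [adj]
  have : b = i.castSucc := by rw [← hs b, hb]; simp [adj]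
  subst a b
  exact absurd h1 (not_lt.mpr Fin.castSucc_lt_succ.le)

theorem mul_adj_adj {n : ℕ} (w : Equiv.Perm (Fin (n + 1))) (i : Fin n) :
    w * adj i * adj i = w := by
  rw [mul_assoc, Equiv.swap_mul_self, mul_one]

theorem mul_adj_castSucc {n : ℕ} (w : Equiv.Perm (Fin (n + 1))) (i : Fin n) :
    (w * adj i) i.castSucc = w i.succ := by simp [adj]

theorem mul_adj_succ {n : ℕ} (w : Equiv.Perm (Fin (n + 1))) (i : Fin n) :
    (w * adj i) i.succ = w i.castSucc := by simp [adj]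

theorem permLength_desc {n : ℕ} (w : Equiv.Perm (Fin (n + 1))) (i : Fin n)
    (h : w i.succ < w i.castSucc) : permLength (w * adj i) + 1 = permLength w := by
  rw [← permLength_asc, mul_adj_adj]
  rwa [mul_adj_castSucc, mul_adj_succ]

theorem eq_one_of_asc {n : ℕ} (w : Equiv.Perm (Fin (n + 1)))
    (h : ∀ i : Fin n, w i.castSucc < w i.succ) : w = 1 := by
  have hm : StrictMono w := Fin.strictMono_iff_lt_succ.mpr h
  have : (w : Fin (n + 1) → Fin (n + 1)) = id := by
    refine hm.range_inj (g := id) strictMono_id |>.mp ?_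
    simp [w.surjective.range_eq]
  ext a
  simp [this]

theorem exists_desc {n : ℕ} (w : Equiv.Perm (Fin (n + 1))) (h : w ≠ 1) :
    ∃ i : Fin n, w i.succ < w i.castSucc := by
  by_contra! hc
  apply h
  apply eq_one_of_asc
  intro i
  refine lt_of_le_of_ne (hc i) ?_
  intro e
  exact absurd (w.injective e) Fin.castSucc_lt_succ.ne

theorem perm_ind {n : ℕ} (P : Equiv.Perm (Fin (n + 1)) → Prop) (h1 : P 1)
    (hstep : ∀ (s : Equiv.Perm (Fin (n + 1))) (j : Fin n), s j.castSucc < s j.succ → P s →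
      P (s * adj j)) : ∀ s, P s := by
  intro s
  induction hl : permLength s generalizing s with
  | zero =>
    by_cases hs : s = 1
    · rw [hs]; exact h1
    · obtain ⟨i, hi⟩ := exists_desc s hs
      have := permLength_desc s i hi
      omega
  | succ k ih =>
    by_cases hs : s = 1
    · rw [hs]; exact h1
    · obtain ⟨i, hi⟩ := exists_desc s hs
      have h2 := permLength_desc s i hi
      have := hstep (s * adj i) i (by rwa [mul_adj_castSucc, mul_adj_succ]) (ih _ (by omega))
      rwa [mul_adj_adj] at this

theorem omegaPerm_apply (N : ℕ) (i : Fin N) : omegaPerm N i = Fin.rev i := rfl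

theorem omegaPerm_mul_self (N : ℕ) : omegaPerm N * omegaPerm N = 1 := by
  ext i; simp [omegaPerm_apply]

/-- Downward induction from the longest permutation. -/
theorem perm_ind_down {n : ℕ} (P : Equiv.Perm (Fin (n + 1)) → Prop) (h1 : P (omegaPerm (n + 1)))
    (hstep : ∀ (s : Equiv.Perm (Fin (n + 1))) (j : Fin n), s j.succ < s j.castSucc → P s →
      P (s * adj j)) : ∀ s, P s := by
  intro s
  have := perm_ind (fun s => P (omegaPerm (n + 1) * s)) (by simpa using h1) ?_
    (omegaPerm (n + 1) * s)
  · simpa [← mul_assoc, omegaPerm_mul_self] using this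
  · intro s j hj hP
    show P (omegaPerm (n + 1) * (s * adj j))
    rw [← mul_assoc]
    apply hstep _ _ _ hP
    simp only [Equiv.Perm.mul_apply, omegaPerm_apply, Fin.rev_lt_rev]
    exact hj

theorem permLength_lt_omega {n : ℕ} (s : Equiv.Perm (Fin (n + 1))) (hs : s ≠ omegaPerm (n + 1)) :
    permLength s < permLength (omegaPerm (n + 1)) := by
  have hle : ∀ s : Equiv.Perm (Fin (n + 1)), permLength s ≤ permLength (omegaPerm (n + 1)) := by
    apply perm_ind_down
    · exact le_rfl
    · intro s j hj h
      have := permLength_desc s j hj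
      omega
  have : ∃ i : Fin n, s i.castSucc < s i.succ := by
    by_contra! hc
    apply hs
    have h1 : omegaPerm (n + 1) * s = 1 := by
      apply eq_one_of_asc
      intro i
      simp only [Equiv.Perm.mul_apply, omegaPerm_apply, Fin.rev_lt_rev]
      refine lt_of_le_of_ne (hc i) ?_
      intro e
      exact absurd (s.injective e) Fin.castSucc_lt_succ.ne'
    rw [← one_mul s, ← omegaPerm_mul_self, mul_assoc, h1, mul_one]
  obtain ⟨i, hi⟩ := this
  have h1 := permLength_asc s i hi
  have h2 := hle (s * adj i)
  omega

theorem permLength_one {n : ℕ} : permLength (1 : Equiv.Perm (Fin n)) = 0 := by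
  rw [permLength, Finset.card_eq_zero, Finset.filter_eq_empty_iff]
  rintro ⟨a, b⟩ _ ⟨h1, h2⟩
  exact absurd h1 (not_lt.mpr h2.le)

theorem exists_small {K : ℕ} (v : Equiv.Perm (Fin (K + 1))) (hv : v ≠ omegaPerm (K + 1)) :
    ∃ i, (v i : ℕ) + i < K := by
  by_contra! hc
  apply hv
  have hsum : ∑ i, ((v i : ℕ) + i) = ∑ i : Fin (K + 1), K := by
    have e := Equiv.sum_comp (omegaPerm (K + 1)) (fun i : Fin (K + 1) => (i : ℕ))
    rw [Finset.sum_add_distrib, Equiv.sum_comp v (fun i : Fin (K + 1) => (i : ℕ))]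
    nth_rewrite 1 [← e]
    rw [← Finset.sum_add_distrib]
    apply Finset.sum_congr rfl
    intro i _
    rw [omegaPerm_apply, Fin.val_rev]
    omega
  have := (Finset.sum_eq_sum_iff_of_le (fun i _ => hc i)).mp hsum.symm
  ext i
  have := this i (Finset.mem_univ i)
  rw [omegaPerm_apply, Fin.val_rev]
  omega

end Perms

section KeyLemma

theorem om_ne_zero [Field F] {β a b : F} (hab : a ≠ b) (hb : 1 + β * b ≠ 0) : om β a b ≠ 0 := by
  rw [om]
  exact div_ne_zero (sub_ne_zero.mpr hab) hb

theorem Psi_diag_aux [Field F] {K : ℕ} (β : F) (x : Fin (K + 1) → F) (hx : Function.Injective x)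
    (hβ : ∀ i, 1 + β * x i ≠ 0) :
    ∀ (s v : Equiv.Perm (Fin (K + 1))),
      permLength v + permLength s < permLength (omegaPerm (K + 1)) →
      Psi β (fun a : Fin K => x a.castSucc) (x ∘ v) (fun l => (s l : ℕ)) = 0 := by
  intro s
  induction s using perm_ind with
  | h1 =>
    intro v hv
    rw [permLength_one] at hv
    have hne : v ≠ omegaPerm (K + 1) := by
      rintro rfl
      omega
    obtain ⟨i, hi⟩ := exists_small v hne
    refine (Psi_top β (fun a : Fin K => x a.castSucc) (x ∘ v)).trans ?_
    refine Finset.prod_eq_zero (Finset.mem_univ (⟨v i, by omega⟩ : Fin K)) ?_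
    refine Finset.prod_eq_zero (Finset.mem_univ i) ?_
    rw [if_pos (by simp only; omega)]
    have : (Fin.castSucc (⟨v i, by omega⟩ : Fin K)) = v i := by ext; simp
    simp only [this]
    simp [om]
  | hstep s j hj ih =>
    intro v hv
    have hs := permLength_asc s j hj
    rw [hs] at hv
    have hv' : permLength (v * adj j) ≤ permLength v + 1 := by
      by_cases hvj : v j.castSucc < v j.succ
      · exact (permLength_asc v j hvj).le
      · have hne : v j.castSucc ≠ v j.succ := fun e =>
          absurd (v.injective e) Fin.castSucc_lt_succ.ne
        have := permLength_desc v j (lt_of_le_of_ne (not_lt.mp hvj) hne.symm)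
        omega
    have h := nest_site β (fun a : Fin K => x a.castSucc) (x ∘ v) (fun i => hβ _) (refv K) j
      (fun l => (s l : ℕ))
    rw [if_pos (by simpa using hj)] at h
    have h1 : nest β (fun a : Fin K => x a.castSucc)
        ((x ∘ v) ∘ Equiv.swap j.castSucc j.succ) (refv K) (fun l => (s l : ℕ)) = 0 :=
      ih (v * adj j) (by omega)
    have h2 : nest β (fun a : Fin K => x a.castSucc) (x ∘ v) (refv K) (fun l => (s l : ℕ)) = 0 :=
      ih v (by omega)
    rw [h1, h2, mul_zero, zero_add] at h
    have hz : om β ((x ∘ v) j.castSucc) ((x ∘ v) j.succ) ≠ 0 := by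
      apply om_ne_zero
      · intro e
        exact absurd (v.injective (hx e)) Fin.castSucc_lt_succ.ne
      · exact hβ _
    exact (mul_eq_zero.mp h.symm).resolve_left hz

theorem Psi_diag [Field F] {K : ℕ} (β : F) (x : Fin (K + 1) → F) (hx : Function.Injective x)
    (hβ : ∀ i, 1 + β * x i ≠ 0) :
    Psi β (fun a : Fin K => x a.castSucc) x = refv (K + 1) := by
  funext s
  rw [refv]
  by_cases hs : ∃ p : Equiv.Perm (Fin (K + 1)), s = fun l => (p l : ℕ)
  · obtain ⟨p, rfl⟩ := hs
    by_cases hp : p = omegaPerm (K + 1)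
    · have e : (fun l => (p l : ℕ)) = fun l : Fin (K + 1) => K - (l : ℕ) := by
        funext l
        rw [hp, omegaPerm_apply, Fin.val_rev]
        omega
      rw [e, Psi_id, if_pos]
      intro a
      simp only
      omega
    · rw [if_neg]
      · have := Psi_diag_aux β x hx hβ p 1
          (by rw [permLength_one, zero_add]; exact permLength_lt_omega p hp)
        exact this
      · intro h
        apply hp
        ext i
        have : (p i : ℕ) + i + 1 = K + 1 := h i
        rw [omegaPerm_apply, Fin.val_rev]
        omega
  · rw [if_neg]
    · by_contra hne
      exact hs (Psi_support _ _ _ _ hne)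
    · intro h
      apply hs
      refine ⟨omegaPerm (K + 1), ?_⟩
      funext l
      have := h l
      rw [omegaPerm_apply, Fin.val_rev]
      omega

theorem nest_key [Field F] {K N : ℕ} (β : F) (x : Fin (K + 1) → F) (hx : Function.Injective x)
    (hβ : ∀ i, 1 + β * x i ≠ 0) (t : Fin N → F) (ht : ∀ i, 1 + β * t i ≠ 0)
    (e : Equiv.Perm (Fin (K + 1))) :
    nest β (x ∘ e) t (Psi β (fun a : Fin K => x a.castSucc) (x ∘ e)) = Psi β x t := by
  induction e using perm_ind with
  | h1 =>
    have : x ∘ (1 : Equiv.Perm (Fin (K + 1))) = x := rfl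
    rw [this, Psi_diag β x hx hβ, Psi]
  | hstep s j hj ih =>
    rw [← ih]
    exact nest_aux β (x ∘ s) t (fun i => hβ _) ht _ _ j
      (fun i => nest_site β _ (x ∘ s) (fun i => hβ _) _ j i)

theorem nest_key' [Field F] {K' K N : ℕ} (hK : K = K' + 1) (β : F) (X : ℕ → F)
    (hX : ∀ i j, i < K → j < K → X i = X j → i = j)
    (hβ : ∀ i, i < K → 1 + β * X i ≠ 0) (t : Fin N → F) (ht : ∀ i, 1 + β * t i ≠ 0)
    (e : Equiv.Perm (Fin K)) (τ : Fin K → F) (hτ : ∀ a, τ a = X (e a)) :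
    nest β τ t (Psi β (fun a : Fin K' => X a) τ) = Psi β (fun a : Fin K => X a) t := by
  subst hK
  have : τ = (fun a : Fin (K' + 1) => X a) ∘ e := funext hτ
  rw [this]
  exact nest_key β (fun a : Fin (K' + 1) => X a)
    (fun i j h => Fin.ext (hX _ _ i.isLt j.isLt h)) (fun i => hβ _ i.isLt) t ht e

theorem psi_eq [Field F] (M : ℕ) (β : F) (X : ℕ → F) (σ : (l : ℕ) → Fin (M + 2 - l) → F)
    (hX : ∀ i j, i < M + 1 → j < M + 1 → X i = X j → i = j)
    (hβ : ∀ i, i < M + 1 → 1 + β * X i ≠ 0) (ht : ∀ i, 1 + β * σ 0 i ≠ 0)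
    (hperm : ∀ l, 1 ≤ l → l ≤ M + 1 →
      ∃ e : Equiv.Perm (Fin (M + 2 - l)), ∀ a, σ l a = X (e a)) :
    ∀ j m, j + m = M → ∀ s, psi β (fun l => M + 2 - l) σ j m s =
      Psi β (fun a : Fin (M + 2 - (m + 1)) => X a) (σ m) (fun l => (s l : ℕ)) := by
  have hσ : ∀ m, m ≤ M + 1 → ∀ i, 1 + β * σ m i ≠ 0 := by
    intro m hm i
    rcases Nat.eq_zero_or_pos m with rfl | hm0
    · exact ht i
    · obtain ⟨e, he⟩ := hperm m hm0 hm
      rw [he]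
      apply hβ
      have := (e i).isLt
      omega
  intro j
  induction j with
  | zero =>
    intro m hm s
    have hm' : m = M := by omega
    subst hm'
    obtain ⟨e, he⟩ := hperm (m + 1) (by omega) le_rfl
    have hK : m + 2 - (m + 1) = 1 := by omega
    have hu : (fun a : Fin (m + 2 - (m + 1)) => X a) = σ (m + 1) := by
      funext a
      rw [he]
      congr 1
      have := a.isLt
      have := (e a).isLt
      omega
    rw [Psi, hu, nest_bridge, psi]
    rw [Finset.sum_eq_single (fun _ => 0)]
    · rw [refv, if_pos, one_mul]
      · rfl
      · intro a
        have := a.isLt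
        simp only [Fin.val_zero]
        omega
    · intro b _ hb
      exact absurd (Subsingleton.elim _ _) hb
    · intro h
      exact absurd (Finset.mem_univ _) h
  | succ j ih =>
    intro m hm s
    obtain ⟨e, he⟩ := hperm (m + 1) (by omega) (by omega)
    rw [← nest_key' (K' := M + 2 - (m + 2)) (by omega) β X
      (fun i j hi hj => hX i j (by omega) (by omega)) (fun i hi => hβ i (by omega))
      (σ m) (hσ m (by omega)) e (σ (m + 1)) he]
    rw [nest_bridge, psi]
    apply Finset.sum_congr rfl
    intro i _
    rw [ih (m + 1) (by omega)]

end KeyLemma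

section Groth

theorem G_desc [Field F] {n : ℕ} {β : F}
    {G : Equiv.Perm (Fin (n + 1)) → (Fin (n + 1) → F) → (Fin (n + 1) → F) → F}
    (hG : IsGroth n β G) (w : Equiv.Perm (Fin (n + 1))) (i : Fin n)
    (h : w i.succ < w i.castSucc) (x y : Fin (n + 1) → F) (hx : x i.castSucc ≠ x i.succ) :
    G (w * adj i) x y = ((1 + β * x i.succ) * G w x y -
      (1 + β * x i.castSucc) * G w (x ∘ adj i) y) / (x i.castSucc - x i.succ) :=
  hG.2 w i x y (permLength_desc w i h) hx

theorem inj_adj {n : ℕ} {x : Fin (n + 1) → F} (hx : Function.Injective x) (i : Fin n) :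
    x i.castSucc ≠ x i.succ := fun e => absurd (hx e) Fin.castSucc_lt_succ.ne

/-- The last `y`-variable does not occur. -/
theorem G_last [Field F] {n : ℕ} {β : F}
    {G : Equiv.Perm (Fin (n + 1)) → (Fin (n + 1) → F) → (Fin (n + 1) → F) → F}
    (hG : IsGroth n β G) (y y' : Fin (n + 1) → F) (hy : ∀ i : Fin n, y i.castSucc = y' i.castSucc)
    (w : Equiv.Perm (Fin (n + 1))) :
    ∀ x : Fin (n + 1) → F, Function.Injective x → G w x y = G w x y' := by
  induction w using perm_ind_down with
  | h1 =>
    intro x _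
    rw [hG.1, hG.1]
    apply Finset.prod_congr rfl
    rintro ⟨a, b⟩ hp
    simp only [Finset.mem_filter, Finset.mem_univ, true_and] at hp
    have := hy ⟨b, by omega⟩
    have e : (Fin.castSucc (⟨b, by omega⟩ : Fin n)) = b := by ext; simp
    rw [e] at this
    simp only [this]
  | hstep w i hi ih =>
    intro x hx
    rw [G_desc hG w i hi x y (inj_adj hx i), G_desc hG w i hi x y' (inj_adj hx i), ih x hx,
      ih (x ∘ adj i) (hx.comp (adj i).injective)]

theorem adj_mul_omega {n : ℕ} (j : Fin n) :
    adj j * omegaPerm (n + 1) = omegaPerm (n + 1) * adj j.rev := by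
  rw [adj, adj, Equiv.mul_swap_eq_swap_mul, omegaPerm_apply, omegaPerm_apply, Fin.rev_castSucc,
    Fin.rev_succ, Fin.rev_rev, Equiv.swap_comm]

theorem corner_prod [Field F] {n : ℕ} (β : F) (j : Fin n) :
    ∃ R : (Fin (n + 1) → F) → (Fin (n + 1) → F) → F,
      (∀ x y, ∏ p ∈ Finset.univ.filter
            (fun p : Fin (n + 1) × Fin (n + 1) => (p.1 : ℕ) + (p.2 : ℕ) + 2 ≤ n + 1),
          (x p.1 + y p.2 + β * x p.1 * y p.2) =
          (x j.rev.castSucc + y j.castSucc + β * x j.rev.castSucc * y j.castSucc) * R x y) ∧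
      (∀ x y, R (x ∘ adj j.rev) y = R x y) ∧ (∀ x y, R x (y ∘ adj j) = R x y) := by
  have hrev : (j.rev : ℕ) + j + 1 = n := by
    rw [Fin.val_rev]; omega
  refine ⟨fun x y => ∏ p ∈ (Finset.univ.filter
            (fun p : Fin (n + 1) × Fin (n + 1) => (p.1 : ℕ) + (p.2 : ℕ) + 2 ≤ n + 1)).erase
            (j.rev.castSucc, j.castSucc), (x p.1 + y p.2 + β * x p.1 * y p.2), ?_, ?_, ?_⟩
  · intro x y
    rw [← Finset.mul_prod_erase _ _ (a := (j.rev.castSucc, j.castSucc))]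
    simp only [Finset.mem_filter, Finset.mem_univ, true_and, Fin.val_castSucc]
    omega
  · intro x y
    refine Finset.prod_equiv ((adj j.rev).prodCongr (Equiv.refl _)) ?_ ?_
    · rintro ⟨a, b⟩
      simp only [Finset.mem_erase, Finset.mem_filter, Finset.mem_univ, true_and,
        Equiv.prodCongr_apply, Prod.map, Equiv.refl_apply, ne_eq, Prod.mk.injEq, adj,
        Equiv.swap_apply_def, Fin.ext_iff, Fin.val_castSucc, Fin.val_succ]
      split_ifs <;> (try simp only [Fin.val_castSucc, Fin.val_succ, true_and, and_true]) <;> omega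
    · rintro ⟨a, b⟩ _
      simp
  · intro x y
    refine Finset.prod_equiv ((Equiv.refl _).prodCongr (adj j)) ?_ ?_
    · rintro ⟨a, b⟩
      simp only [Finset.mem_erase, Finset.mem_filter, Finset.mem_univ, true_and,
        Equiv.prodCongr_apply, Prod.map, Equiv.refl_apply, ne_eq, Prod.mk.injEq, adj,
        Equiv.swap_apply_def, Fin.ext_iff, Fin.val_castSucc, Fin.val_succ]
      split_ifs <;> (try simp only [Fin.val_castSucc, Fin.val_succ, true_and, and_true]) <;> omega
    · rintro ⟨a, b⟩ _
      simp

/-- The recursion by left multiplication (acting on the `y`-variables). -/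
theorem G_left [Field F] {n : ℕ} {β : F}
    {G : Equiv.Perm (Fin (n + 1)) → (Fin (n + 1) → F) → (Fin (n + 1) → F) → F}
    (hG : IsGroth n β G) (j : Fin n) (w : Equiv.Perm (Fin (n + 1))) :
    w.symm j.succ < w.symm j.castSucc →
    ∀ x y : Fin (n + 1) → F, Function.Injective x → Function.Injective y →
    G (adj j * w) x y = ((1 + β * y j.succ) * G w x y -
      (1 + β * y j.castSucc) * G w x (y ∘ adj j)) / (y j.castSucc - y j.succ) := by
  induction w using perm_ind_down with
  | h1 =>
    intro _ x y hx hy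
    obtain ⟨R, h1, h2, h3⟩ := corner_prod β j
    have hx' := sub_ne_zero.mpr (inj_adj hx j.rev)
    have hy' := sub_ne_zero.mpr (inj_adj hy j)
    rw [adj_mul_omega, G_desc hG _ _ _ x y (inj_adj hx j.rev)]
    · simp only [hG.1, h1, h2, h3]
      simp only [Function.comp_apply, adj, Equiv.swap_apply_left]
      rw [div_eq_div_iff hx' hy']
      ring
    · rw [omegaPerm_apply, omegaPerm_apply, Fin.rev_lt_rev]
      exact Fin.castSucc_lt_succ
  | hstep w i hi ih =>
    intro hw x y hx hy
    have hs : ∀ a, (w * adj i).symm a = adj i (w.symm a) := by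
      intro a
      rw [Equiv.symm_apply_eq, Equiv.Perm.mul_apply, Equiv.swap_apply_self, Equiv.apply_symm_apply]
    rw [hs, hs] at hw
    have hw' : w.symm j.succ < w.symm j.castSucc := by
      have := adj_lt i _ _ hw ?_
      · simpa [adj] using this
      · rintro ⟨ha, hb⟩
        have ha' : w.symm j.succ = i.succ := by
          rw [← Equiv.swap_apply_self i.castSucc i.succ (w.symm j.succ), ha, Equiv.swap_apply_left]
        have hb' : w.symm j.castSucc = i.castSucc := by
          rw [← Equiv.swap_apply_self i.castSucc i.succ (w.symm j.castSucc), hb,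
            Equiv.swap_apply_right]
        rw [Equiv.symm_apply_eq] at ha' hb'
        rw [← ha', ← hb'] at hi
        exact absurd hi (not_lt.mpr Fin.castSucc_lt_succ.le)
    have hd : (adj j * w) i.succ < (adj j * w) i.castSucc := by
      rw [Equiv.Perm.mul_apply, Equiv.Perm.mul_apply]
      apply adj_lt j _ _ hi
      rintro ⟨ha, hb⟩
      rw [← ha, ← hb, Equiv.symm_apply_apply, Equiv.symm_apply_apply] at hw
      simp only [adj, Equiv.swap_apply_left, Equiv.swap_apply_right] at hw
      exact absurd hw (not_lt.mpr Fin.castSucc_lt_succ.le)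
    rw [← mul_assoc, G_desc hG _ i hd x y (inj_adj hx i), ih hw' x y hx hy,
      ih hw' (x ∘ adj i) y (hx.comp (adj i).injective) hy,
      G_desc hG w i hi x y (inj_adj hx i), G_desc hG w i hi x (y ∘ adj j) (inj_adj hx i)]
    ring

theorem G_eq_Psi [Field F] {n : ℕ} {β : F}
    {G : Equiv.Perm (Fin (n + 1)) → (Fin (n + 1) → F) → (Fin (n + 1) → F) → F}
    (hG : IsGroth n β G) (x : Fin (n + 1) → F) (hx : Function.Injective x)
    (p : Equiv.Perm (Fin (n + 1))) :
    ∀ t : Fin (n + 1) → F, Function.Injective t → (∀ i, 1 + β * t i ≠ 0) →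
      G (p⁻¹ * omegaPerm (n + 1)) x (fun i => negOm β (t i)) =
        Psi β (fun a : Fin n => x a.castSucc) t (fun l => (p l : ℕ)) := by
  induction p using perm_ind with
  | h1 =>
    intro t ht hβ
    rw [inv_one, one_mul, hG.1]
    refine Eq.trans ?_ (Psi_top β (fun a : Fin n => x a.castSucc) t).symm
    rw [Finset.prod_filter, Fintype.prod_prod_type, Fin.prod_univ_castSucc,
      Finset.prod_eq_one (s := Finset.univ (α := Fin (n + 1))), mul_one]
    · apply Finset.prod_congr rfl
      intro a _
      apply Finset.prod_congr rfl
      intro i _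
      simp only [Fin.val_castSucc]
      refine if_congr (by omega) ?_ rfl
      have := hβ i
      have h2 : negOm β (t i) * (1 + β * t i) = -t i := by
        rw [negOm, div_mul_cancel₀ _ this]
      rw [om, eq_div_iff this]
      linear_combination (1 + β * x a.castSucc) * h2
    · intro i _
      rw [if_neg]
      simp
  | hstep p j hj ih =>
    intro t ht hβ
    have e : (p * adj j)⁻¹ * omegaPerm (n + 1) = adj j * (p⁻¹ * omegaPerm (n + 1)) := by
      rw [mul_inv_rev, Equiv.swap_inv, mul_assoc]
    have hneg : Function.Injective (fun i => negOm β (t i)) := by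
      intro a b hab
      apply ht
      have h1 := hβ a
      have h2 := hβ b
      simp only [negOm] at hab
      rw [div_eq_div_iff h1 h2] at hab
      linear_combination -hab
    have hc : (p⁻¹ * omegaPerm (n + 1)).symm j.succ < (p⁻¹ * omegaPerm (n + 1)).symm j.castSucc := by
      have hs : ∀ a, (p⁻¹ * omegaPerm (n + 1)).symm a = Fin.rev (p a) := by
        intro a
        rw [Equiv.symm_apply_eq, Equiv.Perm.mul_apply, omegaPerm_apply, Fin.rev_rev]
        simp
      rw [hs, hs, Fin.rev_lt_rev]
      exact hj
    rw [e, G_left hG j _ hc x _ hx hneg, ih t ht hβ]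
    have e2 := ih (t ∘ adj j) (ht.comp (adj j).injective) (fun i => hβ _)
    have e3 : (fun i => negOm β ((t ∘ adj j) i)) = (fun i => negOm β (t i)) ∘ adj j := rfl
    rw [e3] at e2
    rw [e2]
    have h := nest_site β (fun a : Fin n => x a.castSucc) t hβ (refv n) j
      (fun l => (p l : ℕ))
    rw [if_pos (by simpa using hj)] at h
    have e4 : (fun l => (p l : ℕ)) ∘ Equiv.swap j.castSucc j.succ =
      fun l => ((p * adj j) l : ℕ) := rfl
    rw [e4] at h
    simp only [Psi]
    rw [h, div_eq_iff (sub_ne_zero.mpr (inj_adj hneg j))]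
    have h1 := hβ j.castSucc
    have h2 := hβ j.succ
    simp only [negOm, om]
    field_simp
    ring

end Groth

/-- **Theorem `thm2`** (complete flag case, `n = N = M+2`, `k_m = N-m`, `σ^{(0)} = t`):
if for each `i = 1,…,N-1` the tuple `(σ^{(i)}_1,…,σ^{(i)}_{N-i})` is a permutation of
`(x_1,…,x_{N-i})`, then the nested Bethe ansatz state satisfies
`|ψ^{(0)}⟩ = ∑_{w ∈ S_N} G^β_w(x_1,…,x_{N-1}; ⊖t_1,…,⊖t_{N-1}) |ω_N w⁻¹⟩`. -/
theorem bethe_state_groth_expansion [Field F] [CharZero F] (M : ℕ) (β : F)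
    (x : Fin (M + 1) → F) (σ : (l : ℕ) → Fin (M + 2 - l) → F)
    (hind : AlgebraicIndependent ℚ
      (Sum.elim (fun _ : Unit => β) (Sum.elim x (σ 0))))
    (hperm : ∀ l, ∀ _hl1 : 1 ≤ l, ∀ _hl2 : l ≤ M + 1,
      ∃ e : Equiv.Perm (Fin (M + 2 - l)), ∀ a,
        σ l a = x ⟨(e a : ℕ), by have := (e a).isLt; omega⟩)
    (G : Equiv.Perm (Fin (M + 2)) → (Fin (M + 2) → F) → (Fin (M + 2) → F) → F)
    (hG : IsGroth (M + 1) β G) :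
    psi β (fun l => M + 2 - l) σ M 0 =
      ∑ w : Equiv.Perm (Fin (M + 2)),
        G w (Fin.snoc x 0)
            (Fin.snoc (fun i : Fin (M + 1) => negOm β (σ 0 i.castSucc)) 0) •
          ket (M + 2) (M + 2) fun j => omegaPerm (M + 2) (w⁻¹ j) := by
  have hone : ∀ a b, a ≠ b → 1 + (Sum.elim (fun _ : Unit => β) (Sum.elim x (σ 0))) a *
      (Sum.elim (fun _ : Unit => β) (Sum.elim x (σ 0))) b ≠ 0 := by
    intro a b _ h0
    have h1 := (algebraicIndependent_iff.mp hind) (1 + MvPolynomial.X a * MvPolynomial.X b)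
      (by simpa using h0)
    have h2 := congrArg MvPolynomial.constantCoeff h1
    simp at h2
  have hinj := hind.injective
  have hxinj : Function.Injective x := by
    intro a b hab
    have := @hinj (Sum.inr (Sum.inl a)) (Sum.inr (Sum.inl b)) (by simpa using hab)
    simpa using this
  have htinj : Function.Injective (σ 0) := by
    intro a b hab
    have := @hinj (Sum.inr (Sum.inr a)) (Sum.inr (Sum.inr b)) (by simpa using hab)
    simpa using this
  have hx0 : ∀ i, x i ≠ 0 := fun i => hind.ne_zero (Sum.inr (Sum.inl i))
  have hxβ : ∀ i, 1 + β * x i ≠ 0 := fun i =>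
    hone (Sum.inl ()) (Sum.inr (Sum.inl i)) (by simp)
  have htβ : ∀ i, 1 + β * σ 0 i ≠ 0 := fun i =>
    hone (Sum.inl ()) (Sum.inr (Sum.inr i)) (by simp)
  let X : ℕ → F := fun n => if h : n < M + 1 then x ⟨n, h⟩ else 0
  have hXx : ∀ n (h : n < M + 1), X n = x ⟨n, h⟩ := fun n h => dif_pos h
  have hxs : Function.Injective (Fin.snoc x 0 : Fin (M + 2) → F) := by
    intro a b
    refine Fin.lastCases ?_ (fun a => ?_) a <;> refine Fin.lastCases ?_ (fun b => ?_) b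
    · simp
    · intro h
      simp only [Fin.snoc_last, Fin.snoc_castSucc] at h
      exact absurd h.symm (hx0 b)
    · intro h
      simp only [Fin.snoc_last, Fin.snoc_castSucc] at h
      exact absurd h (hx0 a)
    · intro h
      simp only [Fin.snoc_castSucc] at h
      rw [hxinj h]
  have hX' : (fun a : Fin (M + 1) => X a) =
      fun a : Fin (M + 1) => (Fin.snoc x 0 : Fin (M + 2) → F) a.castSucc := by
    funext a
    rw [hXx a a.isLt]
    simp
  funext s
  rw [psi_eq M β X σ ?_ ?_ htβ ?_ M 0 rfl s]
  · change Psi (K := M + 1) (N := M + 2) β (fun a : Fin (M + 1) => X a) (σ 0) _ = _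
    rw [Finset.sum_apply, hX']
    have hterm : ∀ w : Equiv.Perm (Fin (M + 2)),
        (G w (Fin.snoc x 0)
            (Fin.snoc (fun i : Fin (M + 1) => negOm β (σ 0 i.castSucc)) 0) •
          ket (M + 2) (M + 2) fun j => omegaPerm (M + 2) (w⁻¹ j)) s =
        if s = fun j => omegaPerm (M + 2) (w⁻¹ j) then
          G w (Fin.snoc x 0) (fun i : Fin (M + 2) => negOm β (σ 0 i)) else 0 := by
      intro w
      rw [Pi.smul_apply, ket, smul_eq_mul, mul_ite, mul_one, mul_zero]
      congr 1
      apply G_last hG _ _ _ _ _ hxs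
      intro i
      simp
    rw [Finset.sum_congr rfl fun w _ => hterm w]
    by_cases hs : ∃ p : Equiv.Perm (Fin (M + 2)), (fun l => (s l : ℕ)) = fun l => (p l : ℕ)
    · obtain ⟨p, hp⟩ := hs
      have hsp : s = p := by
        funext l
        exact Fin.ext (congrFun hp l)
      rw [hp, ← G_eq_Psi hG _ hxs p (σ 0) htinj htβ]
      rw [Finset.sum_eq_single (p⁻¹ * omegaPerm (M + 2)), if_pos]
      · rw [hsp]
        funext j
        simp only [mul_inv_rev, inv_inv, Equiv.Perm.mul_apply]
        rw [← Equiv.Perm.mul_apply (omegaPerm (M + 2)), mul_inv_cancel]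
        rfl
      · intro w _ hw
        rw [if_neg]
        intro h
        apply hw
        have h1 : p = omegaPerm (M + 2) * w⁻¹ := by
          apply Equiv.ext
          intro j
          rw [← hsp, h]
          rfl
        rw [h1, mul_inv_rev, inv_inv, mul_assoc, inv_mul_cancel, mul_one]
      · intro h
        exact absurd (Finset.mem_univ _) h
    · have h0 : Psi β (fun a : Fin (M + 1) => (Fin.snoc x 0 : Fin (M + 2) → F) a.castSucc) (σ 0)
          (fun l => (s l : ℕ)) = 0 := by
        by_contra hne
        exact hs (Psi_support _ _ _ _ hne)
      refine h0.trans (Eq.symm ?_)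
      apply Finset.sum_eq_zero
      intro w _
      rw [if_neg]
      intro h
      apply hs
      refine ⟨omegaPerm (M + 2) * w⁻¹, ?_⟩
      rw [h]
      rfl
  · intro i j hi hj h
    rw [hXx i hi, hXx j hj] at h
    simpa using hxinj h
  · intro i hi
    rw [hXx i hi]
    exact hxβ _
  · intro l h1 h2
    obtain ⟨e, he⟩ := hperm l h1 h2
    refine ⟨e, fun a => ?_⟩
    rw [he, hXx]
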